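/- (Theorem TN.) Suppose the restricted player uses the greedy strategy and the unrestricted player uses, for each n, an arbitrary non-stupid strategy. Then, as n → ∞, n^{−1/2}·S(T_0) converges in distribution to the centered normal distribution N(0,2), and n^{−1/2}·(S_n − S(T_0)) converges in distribution to the law of max(Z_1, Z_2, Z_3), where (Z_1,Z_2,Z_3) is a centered jointly Gaussian random vector with covariance matrix [[2,−1,−1],[−1,2,−1],[−1,−1,2]]. -/

import Mathlib

open MeasureTheory ProbabilityTheory Real Filter
open scoped ENNReal Topology

namespace RPSStrategy

/-- Moves are `Fin 3`; move `m` beats move `r` iff `m = r + 1` (cyclically). -/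
def count (h : ℕ → Fin 3 × Fin 3) (t : ℕ) (i : Fin 3) : ℕ :=
  ((Finset.range t).filter fun u => (h u).1 = i).card

/-- The greedy (optimal) single-round distribution for the restricted player, given the
counts `cnt` of her previous moves: uniform if all moves are available; probabilities
`1/3` and `2/3` on `a` and `b = a+1` if only these two are available; and the forced move
if only one is available. -/
noncomputable def greedyProb (n : ℕ) (cnt : Fin 3 → ℕ) (a : Fin 3) : ℝ≥0∞ :=
  let k := (Finset.univ.filter fun i => cnt i = n).card
  if k = 0 then 1 / 3
  else if k = 1 then
    (if cnt a = n then 0 else if cnt (a + 1) = n then 2 / 3 else 1 / 3)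
  else if k = 2 then (if cnt a < n then 1 else 0)
  else 0

/-- The joint law of the moves `(r_t, m_t)` in semi-restricted RPS over `3n` rounds, when the
restricted player plays greedily and the unrestricted player uses an arbitrary non-stupid
behavioral strategy: conditionally on any history, `r_t` has the greedy law and is independent
of `m_t`, and `m_t` never takes a value that cannot win. -/
def IsGreedyVsNonStupid {Ω : Type*} [MeasurableSpace Ω] (n : ℕ) (μ : Measure Ω)
    (r m : ℕ → Ω → Fin 3) : Prop :=
  IsProbabilityMeasure μ ∧ (∀ t, Measurable (r t)) ∧ (∀ t, Measurable (m t)) ∧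
  ∀ t, t < 3 * n → ∀ h : ℕ → Fin 3 × Fin 3,
    (∀ a b : Fin 3,
      μ ({ω | ∀ u < t, (r u ω, m u ω) = h u} ∩ {ω | r t ω = a ∧ m t ω = b})
        = greedyProb n (count h t) a
            * μ ({ω | ∀ u < t, (r u ω, m u ω) = h u} ∩ {ω | m t ω = b})) ∧
    (∀ c : Fin 3, count h t c = n → count h t (c + 1) < n → count h t (c + 2) < n →
      μ ({ω | ∀ u < t, (r u ω, m u ω) = h u} ∩ {ω | m t ω = c + 1}) = 0) ∧
    (∀ a : Fin 3, count h t a < n → count h t (a + 1) = n → count h t (a + 2) = n →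
      μ ({ω | ∀ u < t, (r u ω, m u ω) = h u} ∩ {ω | m t ω = a + 1})
        = μ {ω | ∀ u < t, (r u ω, m u ω) = h u})

/-- The score `S(t)` of the unrestricted player after `t` rounds. -/
def score {Ω : Type*} (r m : ℕ → Ω → Fin 3) (t : ℕ) (ω : Ω) : ℤ :=
  (((Finset.range t).filter fun u => m u ω = r u ω + 1).card : ℤ)
    - (((Finset.range t).filter fun u => r u ω = m u ω + 1).card : ℤ)

/-- `T0 n = 3n − 3⌈n^{2/3}⌉`. -/
noncomputable def T0 (n : ℕ) : ℕ := 3 * n - 3 * ⌈(n : ℝ) ^ ((2 : ℝ) / 3)⌉₊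

/-! As long as all three moves are open, the greedy move is uniform given the past and given the
answer of the unrestricted player. The payoff of such a round is then uniform on `{-1, 0, 1}`
whatever she answers, so up to a time before which an exhausted move is unlikely, characteristic
functions behave as for independent rounds, and the score obeys the central limit theorem. For the
same reason the three differences `N i - N (i + 1)` between the numbers of plays of the restricted
player satisfy a joint central limit theorem, whose limit has the law of `(Z₁, Z₂, Z₃)`.

In the remaining rounds, once a move `c` is exhausted, non-stupidity and the greedy weights `1 / 3`,
`2 / 3` make the payoff minus the indicator of the play `c + 1` a fair bet, and once a second move
is exhausted every round is won. With `x` and `y` plays of `c + 1` and `c + 2` left when `c` is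
exhausted, the score is therefore `max x (y - x)`, which is the largest of the three differences, up
to sums of fair bets. Over the last `3 * ⌈n ^ (2 / 3)⌉` rounds these sums have size `o(√n)` in `L¹`.
-/

/-- The sequences of pairs of moves `(r_u, m_u)`, starting with round `u = 0`. A quantity known
after `t` rounds is a function `F` on histories with `DependsOn F (Set.Iio t)`. -/
abbrev History : Type := ℕ → Fin 3 × Fin 3

/-- The history realised at the outcome `ω`. -/
def history {Ω : Type*} (r m : ℕ → Ω → Fin 3) (ω : Ω) : History := fun u ↦ (r u ω, m u ω)

lemma dependsOn_count (t : ℕ) : DependsOn (fun h ↦ count h t) (Set.Iio t) := by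
  intro h h' hh
  funext i
  exact congrArg Finset.card (Finset.filter_congr fun u hu ↦ by rw [hh u (Finset.mem_range.1 hu)])

lemma exists_domRestrict_eq {s : Set ℕ} (x : s → Fin 3 × Fin 3) :
    ∃ h : History, s.domRestrict h = x :=
  Subtype.val_injective.surjective_comp_right x

lemma preimage_domRestrict_history {Ω : Type*} {r m : ℕ → Ω → Fin 3} (t : ℕ) (h : History) :
    (fun ω ↦ (Set.Iio t).domRestrict (history r m ω)) ⁻¹' {(Set.Iio t).domRestrict h} =
      {ω | ∀ u < t, (r u ω, m u ω) = h u} := by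
  ext ω
  simp [funext_iff, history]

section Law

variable {Ω : Type*} [MeasurableSpace Ω] {n t : ℕ} {μ : Measure Ω} {r m : ℕ → Ω → Fin 3}

lemma measurable_domRestrict_history (hr : ∀ t, Measurable (r t)) (hm : ∀ t, Measurable (m t))
    (s : Set ℕ) : Measurable fun ω ↦ s.domRestrict (history r m ω) :=
  measurable_pi_lambda _ fun u ↦ (hr u).prodMk (hm u)

lemma measurable_comp_history {E : Type*} [MeasurableSpace E] [Nonempty E]
    (hr : ∀ t, Measurable (r t)) (hm : ∀ t, Measurable (m t)) {F : History → E}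
    (hF : DependsOn F (Set.Iio t)) : Measurable fun ω ↦ F (history r m ω) := by
  obtain ⟨g, rfl⟩ := dependsOn_iff_exists_comp.1 hF
  exact (measurable_of_finite g).comp (measurable_domRestrict_history hr hm _)

lemma measurable_sum_moves (hr : ∀ t, Measurable (r t)) (hm : ∀ t, Measurable (m t))
    (f : Fin 3 → Fin 3 → ℝ) (s : Finset ℕ) : Measurable fun ω ↦ ∑ u ∈ s, f (r u ω) (m u ω) :=
  Finset.measurable_fun_sum _ fun u _ ↦
    (measurable_of_countable (Function.uncurry f)).comp ((hr u).prodMk (hm u))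

lemma integrable_comp_history {E : Type*} [NormedAddCommGroup E] [IsProbabilityMeasure μ]
    (hr : ∀ t, Measurable (r t)) (hm : ∀ t, Measurable (m t)) {F : History → E}
    (hF : DependsOn F (Set.Iio t)) : Integrable (fun ω ↦ F (history r m ω)) μ := by
  obtain ⟨g, rfl⟩ := dependsOn_iff_exists_comp.1 hF
  have hmeas := measurable_domRestrict_history hr hm (Set.Iio t)
  have := Measure.isProbabilityMeasure_map hmeas.aemeasurable (μ := μ)
  exact (Integrable.of_finite : Integrable g (μ.map _)).comp_measurable hmeas

lemma ae_history_of_cylinder {Q : History → Prop} (hQ : DependsOn Q (Set.Iio t))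
    (hnull : ∀ h, ¬ Q h → μ {ω | ∀ u < t, (r u ω, m u ω) = h u} = 0) :
    ∀ᵐ ω ∂μ, Q (history r m ω) := by
  obtain ⟨g, rfl⟩ := dependsOn_iff_exists_comp.1 hQ
  have hfib (x : Set.Iio t → Fin 3 × Fin 3) (hx : ¬ g x) :
      ∀ᵐ ω ∂μ, (Set.Iio t).domRestrict (history r m ω) ≠ x := by
    obtain ⟨h, rfl⟩ := exists_domRestrict_eq x
    simp only [ae_iff, ne_eq, not_not]
    exact (congrArg μ (preimage_domRestrict_history t h)).trans (hnull h hx)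
  have hall := ae_all_iff.2 fun x ↦ eventually_imp_distrib_left.2 (hfib x)
  filter_upwards [hall] with ω hω
  exact of_not_not fun hg ↦ hω _ hg rfl

lemma integral_comp_of_finite {α E : Type*} [Fintype α] [MeasurableSpace α]
    [MeasurableSingletonClass α] [NormedAddCommGroup E] [NormedSpace ℝ E] [CompleteSpace E]
    [IsFiniteMeasure μ] {X : Ω → α} (hX : Measurable X) (f : α → E) :
    ∫ ω, f (X ω) ∂μ = ∑ x, μ.real (X ⁻¹' {x}) • f x := by
  rw [← integral_map (φ := X) (f := f) hX.aemeasurable (by fun_prop),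
    integral_fintype Integrable.of_finite]
  simp_rw [map_measureReal_apply hX (measurableSet_singleton _)]

/-- The greedy rule, integrated: the restricted player's move may be averaged out, since it is
independent of her opponent's given the past. -/
lemma integral_greedy {E : Type*} [NormedAddCommGroup E] [NormedSpace ℝ E] [CompleteSpace E]
    (H : IsGreedyVsNonStupid n μ r m) (ht : t < 3 * n) {F : History → Fin 3 → Fin 3 → E}
    (hF : DependsOn F (Set.Iio t)) :
    ∫ ω, F (history r m ω) (r t ω) (m t ω) ∂μ =
      ∫ ω, ∑ a, (greedyProb n (count (history r m ω) t) a).toReal •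
        F (history r m ω) a (m t ω) ∂μ := by
  obtain ⟨_, hr, hm, hlaw⟩ := H
  obtain ⟨G, rfl⟩ := dependsOn_iff_exists_comp.1 hF
  obtain ⟨N, hN⟩ := dependsOn_iff_exists_comp.1 (dependsOn_count t)
  have hpast := measurable_domRestrict_history hr hm (Set.Iio t)
  simp only [Function.comp_apply, fun h ↦ congrFun hN h]
  rw [integral_comp_of_finite (hpast.prodMk ((hm t).prodMk (hr t))) fun x ↦ G x.1 x.2.2 x.2.1,
    integral_comp_of_finite (hpast.prodMk (hm t))
      fun x ↦ ∑ a, (greedyProb n (N x.1) a).toReal • G x.1 a x.2]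
  simp only [Fintype.sum_prod_type, Finset.smul_sum, smul_smul]
  refine Finset.sum_congr rfl fun x _ ↦ Finset.sum_congr rfl fun b _ ↦
    Finset.sum_congr rfl fun a _ ↦ ?_
  obtain ⟨h, rfl⟩ := exists_domRestrict_eq x
  have hset : {ω | r t ω = a ∧ m t ω = b} = m t ⁻¹' {b} ∩ r t ⁻¹' {a} := Set.inter_comm _ _
  have hround := congrArg ENNReal.toReal ((hlaw t ht h).1 a b)
  rw [ENNReal.toReal_mul, hset] at hround
  simp only [← Set.singleton_prod_singleton, Set.mk_preimage_prod, preimage_domRestrict_history,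
    measureReal_def, hround]
  rw [mul_comm, show N ((Set.Iio t).domRestrict h) = count h t from (congrFun hN h).symm]
  rfl

end Law

/-- After `N i` plays of each move `i` by the restricted player, the next pair of moves `x` does
not play an exhausted move and does not answer with a move that cannot win. -/
structure IsAdmissibleRound (n : ℕ) (N : Fin 3 → ℕ) (x : Fin 3 × Fin 3) : Prop where
  count_ne : N x.1 ≠ n
  ne_of_one_exhausted : ∀ c, N c = n → N (c + 1) < n → N (c + 2) < n → x.2 ≠ c + 1
  eq_of_two_exhausted : ∀ a, N a < n → N (a + 1) = n → N (a + 2) = n → x.2 = a + 1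

/-- The histories compatible with the greedy strategy and with some non-stupid strategy. -/
def IsAdmissible (n : ℕ) (h : History) : Prop :=
  ∀ t < 3 * n, IsAdmissibleRound n (count h t) (h t)

lemma greedyProb_eq_zero {n : ℕ} {cnt : Fin 3 → ℕ} {a : Fin 3} (ha : cnt a = n) :
    greedyProb n cnt a = 0 := by
  have hk : (Finset.univ.filter fun i ↦ cnt i = n).card ≠ 0 :=
    Finset.card_ne_zero_of_mem (a := a) (by simpa using ha)
  simp [greedyProb, hk, ha]

section Admissible

variable {Ω : Type*} [MeasurableSpace Ω] {n : ℕ} {μ : Measure Ω} {r m : ℕ → Ω → Fin 3}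

lemma ae_round_of_measure_inter_eq_zero {Q : (Fin 3 → ℕ) → Fin 3 × Fin 3 → Prop} {t : ℕ}
    (hQ : ∀ h : History, ¬ Q (count h t) (h t) →
      μ ({ω | ∀ u < t, (r u ω, m u ω) = h u} ∩ {ω | r t ω = (h t).1 ∧ m t ω = (h t).2}) = 0) :
    ∀ᵐ ω ∂μ, Q (count (history r m ω) t) (history r m ω t) := by
  have hdep : DependsOn (fun h : History ↦ Q (count h t) (h t)) (Set.Iio (t + 1)) := by
    intro h h' hh
    have hcount : count h t = count h' t :=
      dependsOn_count t fun u hu ↦ hh u (Nat.lt_succ_of_lt hu)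
    simp only [hcount, hh t (Set.mem_Iio.2 t.lt_succ_self)]
  refine ae_history_of_cylinder hdep fun h hh ↦ measure_mono_null (fun ω hω ↦ ?_) (hQ h hh)
  exact ⟨fun u hu ↦ hω u (by omega), Prod.ext_iff.1 (hω t (by omega))⟩

lemma measure_sdiff_eq_zero_of_measure_inter_eq [IsFiniteMeasure μ] {A B : Set Ω}
    (hB : MeasurableSet B) (hAB : μ (A ∩ B) = μ A) : μ (A \ B) = 0 := by
  have hsum := measure_inter_add_sdiff (μ := μ) A hB
  exact (ENNReal.add_right_inj (measure_ne_top μ A)).1 (by rw [← hAB, hsum, hAB, add_zero])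

lemma ae_isAdmissible (H : IsGreedyVsNonStupid n μ r m) :
    ∀ᵐ ω ∂μ, IsAdmissible n (history r m ω) := by
  obtain ⟨_, -, hm, hlaw⟩ := H
  refine ae_all_iff.2 fun t ↦ eventually_imp_distrib_left.2 fun ht ↦
    ae_round_of_measure_inter_eq_zero fun h hbad ↦ ?_
  obtain ⟨hgreedy, hloses, hwins⟩ := hlaw t ht h
  contrapose! hbad
  refine ⟨fun hc ↦ hbad ?_, fun c hc hc1 hc2 hmove ↦ hbad ?_,
    fun a ha ha1 ha2 ↦ by_contra fun hmove ↦ hbad ?_⟩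
  · rw [hgreedy, greedyProb_eq_zero hc, zero_mul]
  · refine measure_mono_null (fun ω hω ↦ ?_) (hloses c hc hc1 hc2)
    exact ⟨hω.1, hω.2.2.trans hmove⟩
  · refine measure_mono_null (fun ω hω ↦ ?_) (measure_sdiff_eq_zero_of_measure_inter_eq
      (hm t (measurableSet_singleton (a + 1))) (hwins a ha ha1 ha2))
    exact ⟨hω.1, fun hwin ↦ hmove (hω.2.2.symm.trans hwin)⟩

end Admissible

section FairBets

variable {Ω : Type*} [MeasurableSpace Ω] {n s t : ℕ} {μ : Measure Ω} {r m : ℕ → Ω → Fin 3}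
  {G : ℕ → History → Prop} {f : Fin 3 → Fin 3 → ℝ}

open Classical in
/-- The total of `f` over those rounds `u ∈ [s, t)` at which the gate `G u` is open. -/
noncomputable def gatedSum (G : ℕ → History → Prop) (f : Fin 3 → Fin 3 → ℝ) (s t : ℕ)
    (h : History) : ℝ :=
  ∑ u ∈ Finset.Ico s t with G u h, f (h u).1 (h u).2

lemma gatedSum_succ (hst : s ≤ t) (h : History) :
    gatedSum G f s (t + 1) h = gatedSum G f s t h + gatedSum G f t (t + 1) h := by
  simp [gatedSum, Finset.sum_filter, Finset.sum_Ico_succ_top hst]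

/-- Whether the gate is open is known before the round, and then `f` has mean zero under the greedy
strategy, whatever the other player does: the sums of `f` over the gated rounds form a
martingale. -/
structure IsFairBet (n : ℕ) (G : ℕ → History → Prop) (f : Fin 3 → Fin 3 → ℝ) : Prop where
  dependsOn : ∀ u, DependsOn (G u) (Set.Iio u)
  mean_eq_zero : ∀ u h, G u h → ∀ b, ∑ a, (greedyProb n (count h u) a).toReal * f a b = 0

lemma dependsOn_gatedSum (hG : ∀ u, DependsOn (G u) (Set.Iio u)) (s t : ℕ) :
    DependsOn (gatedSum G f s t) (Set.Iio t) := by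
  classical
  intro h h' hh
  simp only [gatedSum, Finset.sum_filter]
  refine Finset.sum_congr rfl fun u hu ↦ ?_
  have hut := (Finset.mem_Ico.1 hu).2
  rw [hh u hut, hG u fun v hv ↦ hh v (lt_trans hv hut)]

lemma IsFairBet.integral_mul_eq_zero (hf : IsFairBet n G f) (H : IsGreedyVsNonStupid n μ r m)
    (ht : t < 3 * n) {X : History → ℝ} (hX : DependsOn X (Set.Iio t)) :
    ∫ ω, X (history r m ω) * gatedSum G f t (t + 1) (history r m ω) ∂μ = 0 := by
  classical
  have hdep : DependsOn (fun h a b ↦ X h * if G t h then f a b else 0) (Set.Iio t) :=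
    fun h h' hh ↦ by simp only [hX hh, hf.dependsOn t hh]
  have hsum (h : History) (b : Fin 3) : ∑ a, (greedyProb n (count h t) a).toReal •
      (X h * if G t h then f a b else 0) = 0 := by
    split_ifs with hGt
    · simp only [smul_eq_mul, mul_left_comm _ (X h), ← Finset.mul_sum, hf.mean_eq_zero t h hGt b,
        mul_zero]
    · simp
  have hint := integral_greedy H ht hdep
  simp only [hsum, integral_zero] at hint
  simpa [gatedSum, Finset.sum_filter, history] using hint

lemma sq_gatedSum_succ_le {C : ℝ} (hC : ∀ a b, |f a b| ≤ C) (t : ℕ) (h : History) :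
    gatedSum G f t (t + 1) h ^ 2 ≤ C ^ 2 := by
  classical
  simp only [gatedSum, Finset.sum_filter, Nat.Ico_succ_singleton, Finset.sum_singleton]
  split_ifs
  · exact sq_le_sq' (abs_le.1 (hC _ _)).1 (abs_le.1 (hC _ _)).2
  · simpa using sq_nonneg C

lemma IsFairBet.integral_sq_gatedSum_le (hf : IsFairBet n G f) (H : IsGreedyVsNonStupid n μ r m)
    {C : ℝ} (hC : ∀ a b, |f a b| ≤ C) (hst : s ≤ t) (ht : t ≤ 3 * n) :
    ∫ ω, gatedSum G f s t (history r m ω) ^ 2 ∂μ ≤ C ^ 2 * (t - s) := by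
  obtain ⟨_, hr, hm, -⟩ := id H
  induction t, hst using Nat.le_induction with
  | base => simp [gatedSum]
  | succ t hst ih =>
    set X : Ω → ℝ := fun ω ↦ gatedSum G f s t (history r m ω)
    set Y : Ω → ℝ := fun ω ↦ gatedSum G f t (t + 1) (history r m ω)
    have hX := dependsOn_gatedSum (f := f) hf.dependsOn s t
    have hX' := hX.mono (Set.Iio_subset_Iio t.le_succ)
    have hY := dependsOn_gatedSum (f := f) hf.dependsOn t (t + 1)
    have hXX : Integrable (fun ω ↦ X ω ^ 2) μ :=
      integrable_comp_history hr hm fun h h' hh ↦ congrArg (· ^ 2) (hX hh)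
    have hXY : Integrable (fun ω ↦ X ω * Y ω) μ :=
      integrable_comp_history hr hm fun h h' hh ↦ congrArg₂ (· * ·) (hX' hh) (hY hh)
    have hYY : Integrable (fun ω ↦ Y ω ^ 2) μ :=
      integrable_comp_history hr hm fun h h' hh ↦ congrArg (· ^ 2) (hY hh)
    have hcross : ∫ ω, X ω * Y ω ∂μ = 0 := hf.integral_mul_eq_zero H ht hX
    have hlast : ∫ ω, Y ω ^ 2 ∂μ ≤ C ^ 2 := by
      simpa using integral_mono hYY (integrable_const (C ^ 2)) fun ω ↦ sq_gatedSum_succ_le hC t _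
    calc ∫ ω, gatedSum G f s (t + 1) (history r m ω) ^ 2 ∂μ
        = ∫ ω, (X ω ^ 2 + 2 * (X ω * Y ω) + Y ω ^ 2) ∂μ := by
          simp only [gatedSum_succ hst, X, Y]
          congr! 2 with ω
          ring
      _ = ∫ ω, X ω ^ 2 ∂μ + 2 * ∫ ω, X ω * Y ω ∂μ + ∫ ω, Y ω ^ 2 ∂μ := by
          rw [← integral_const_mul, ← integral_add hXX (hXY.const_mul 2)]
          exact integral_add (hXX.add (hXY.const_mul 2)) hYY
      _ ≤ C ^ 2 * ((t + 1 : ℕ) - s) := by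
          rw [hcross]
          push_cast
          linarith [ih (by omega)]

lemma integral_abs_le_sqrt_integral_sq [IsProbabilityMeasure μ] {X : Ω → ℝ} (hX : MemLp X 2 μ) :
    ∫ ω, |X ω| ∂μ ≤ √(∫ ω, X ω ^ 2 ∂μ) := by
  have hvar := variance_nonneg |X| μ
  rw [variance_eq_sub hX.abs] at hvar
  simpa using Real.le_sqrt_of_sq_le (by simpa using hvar)

lemma IsFairBet.integral_abs_gatedSum_le (hf : IsFairBet n G f) (H : IsGreedyVsNonStupid n μ r m)
    {C : ℝ} (hC : ∀ a b, |f a b| ≤ C) (hst : s ≤ t) (ht : t ≤ 3 * n) :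
    ∫ ω, |gatedSum G f s t (history r m ω)| ∂μ ≤ C * √(t - s) := by
  obtain ⟨_, hr, hm, -⟩ := id H
  have hdep := dependsOn_gatedSum (f := f) hf.dependsOn s t
  have hmem : MemLp (fun ω ↦ gatedSum G f s t (history r m ω)) 2 μ :=
    (memLp_two_iff_integrable_sq (measurable_comp_history hr hm hdep).aestronglyMeasurable).2
      (integrable_comp_history hr hm fun h h' hh ↦ congrArg (· ^ 2) (hdep hh))
  calc ∫ ω, |gatedSum G f s t (history r m ω)| ∂μ
      ≤ √(C ^ 2 * (t - s)) := (integral_abs_le_sqrt_integral_sq hmem).trans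
        (Real.sqrt_le_sqrt (hf.integral_sq_gatedSum_le H hC hst ht))
    _ = C * √(t - s) := by
        rw [Real.sqrt_mul (sq_nonneg C), Real.sqrt_sq ((abs_nonneg _).trans (hC 0 0))]

end FairBets

section Payoff

/-- What the unrestricted player gains in a round where the restricted player plays `a` and she
plays `b`. -/
def payoff (a b : Fin 3) : ℝ := if b = a + 1 then 1 else if a = b + 1 then -1 else 0

/-- The surplus `N i - N (i + 1)` of the restricted player's moves `i` over her moves `i + 1`. -/
def lead (h : History) (t : ℕ) (i : Fin 3) : ℝ := count h t i - count h t (i + 1)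

/-- The increment of `lead` in a round where the restricted player plays `a`. -/
def leadIncrement (i a : Fin 3) : ℝ := (if a = i then 1 else 0) - if a = i + 1 then 1 else 0

lemma sum_count (h : History) (t : ℕ) : ∑ i, count h t i = t := by
  simpa [count] using
    (Finset.card_eq_sum_card_fiberwise (s := Finset.range t) (t := Finset.univ)
      (f := fun u ↦ (h u).1) (by simp [Set.MapsTo])).symm

lemma sum_univ_fin_three_rotate {M : Type*} [AddCommMonoid M] (v : Fin 3 → M) (c : Fin 3) :
    ∑ i, v i = v c + v (c + 1) + v (c + 2) := by
  rw [← Equiv.sum_comp (Equiv.addLeft c), Fin.sum_univ_three]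
  simp

lemma add_two_add_one (c : Fin 3) : c + 2 + 1 = c := by decide +revert

lemma count_add_count_add_count (h : History) (t : ℕ) (c : Fin 3) :
    count h t c + count h t (c + 1) + count h t (c + 2) = t := by
  rw [← sum_univ_fin_three_rotate, sum_count]

lemma monotone_count (h : History) (i : Fin 3) : Monotone fun t ↦ count h t i := fun _ _ hst ↦
  Finset.card_le_card (Finset.filter_subset_filter _ (Finset.range_mono hst))

lemma count_succ (h : History) (t : ℕ) (i : Fin 3) :
    count h (t + 1) i = count h t i + if (h t).1 = i then 1 else 0 := by
  rw [count, Finset.range_add_one, Finset.filter_insert]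
  split_ifs <;> simp [count]

lemma count_sub_count (h : History) {s t : ℕ} (hst : s ≤ t) (i : Fin 3) :
    (count h t i : ℝ) - count h s i = ∑ u ∈ Finset.Ico s t, if (h u).1 = i then 1 else 0 := by
  rw [Finset.sum_Ico_eq_sub _ hst]
  simp [count, Finset.sum_boole]

lemma lead_sub_lead (h : History) {s t : ℕ} (hst : s ≤ t) (i : Fin 3) :
    lead h t i - lead h s i = ∑ u ∈ Finset.Ico s t, leadIncrement i (h u).1 := by
  simp only [leadIncrement, Finset.sum_sub_distrib, ← count_sub_count h hst, lead]
  ring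

lemma lead_eq_sum (h : History) (t : ℕ) (i : Fin 3) :
    lead h t i = ∑ u ∈ Finset.range t, leadIncrement i (h u).1 := by
  simpa [lead, count] using lead_sub_lead h t.zero_le i

lemma score_eq_sum {Ω : Type*} (r m : ℕ → Ω → Fin 3) (t : ℕ) (ω : Ω) :
    (score r m t ω : ℝ) = ∑ u ∈ Finset.range t, payoff (r u ω) (m u ω) := by
  have hasymm : ∀ a b : Fin 3, b = a + 1 → a ≠ b + 1 := by decide
  have hpayoff (a b : Fin 3) :
      payoff a b = (if b = a + 1 then 1 else 0) - if a = b + 1 then 1 else 0 := by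
    unfold payoff
    split_ifs with hwin hloss <;> simp_all
  simp [score, hpayoff, Finset.sum_boole]

lemma score_sub_score_eq_sum {Ω : Type*} (r m : ℕ → Ω → Fin 3) {s t : ℕ} (hst : s ≤ t) (ω : Ω) :
    ((score r m t ω - score r m s ω : ℤ) : ℝ) =
      ∑ u ∈ Finset.Ico s t, payoff (r u ω) (m u ω) := by
  rw [Int.cast_sub, score_eq_sum, score_eq_sum, Finset.sum_Ico_eq_sub _ hst]

lemma gatedSum_eq_sum_Ico {G : ℕ → History → Prop} {f : Fin 3 → Fin 3 → ℝ} {s t a b : ℕ}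
    {h : History} (hG : ∀ u, s ≤ u → u < t → (G u h ↔ a ≤ u ∧ u < b)) (hsa : s ≤ a) (hbt : b ≤ t) :
    gatedSum G f s t h = ∑ u ∈ Finset.Ico a b, f (h u).1 (h u).2 := by
  classical
  refine Finset.sum_congr (Finset.ext fun u ↦ ?_) fun _ _ ↦ rfl
  simp only [Finset.mem_filter, Finset.mem_Ico]
  grind

end Payoff

section Exhaustion

variable {n t : ℕ} {h : History}

/-- No move is exhausted after `t` rounds. -/
def AllOpen (n t : ℕ) (h : History) : Prop := ∀ i, count h t i < n

/-- Exactly the move `c` is exhausted after `t` rounds. -/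
def OnlyExhausted (n : ℕ) (c : Fin 3) (t : ℕ) (h : History) : Prop :=
  count h t c = n ∧ count h t (c + 1) < n ∧ count h t (c + 2) < n

lemma IsAdmissible.count_le (hh : IsAdmissible n h) (ht : t ≤ 3 * n) (i : Fin 3) :
    count h t i ≤ n := by
  induction t with
  | zero => simp [count]
  | succ t ih =>
    have hle := ih (by omega)
    have hne := (hh t ht).count_ne
    rw [count_succ]
    split_ifs with hi
    · subst hi; omega
    · omega

lemma IsAdmissible.exists_first_exhaustion (hh : IsAdmissible n h) :
    ∃ c, ∃ τ ≤ 3 * n, count h τ c = n ∧ ∀ t, AllOpen n t h ↔ t < τ := by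
  classical
  have hend : ¬ AllOpen n (3 * n) h := fun hopen ↦ by
    have := count_add_count_add_count h (3 * n) 0
    have := hopen 0; have := hopen (0 + 1); have := hopen (0 + 2)
    omega
  have hex : ∃ t, ¬ AllOpen n t h := ⟨_, hend⟩
  have hτ : Nat.find hex ≤ 3 * n := Nat.find_min' hex hend
  obtain ⟨c, hc⟩ := not_forall.1 (Nat.find_spec hex)
  refine ⟨c, Nat.find hex, hτ, (hh.count_le hτ c).antisymm (not_lt.1 hc), fun t ↦ ?_⟩
  refine ⟨fun hopen ↦ ?_, fun ht ↦ not_not.1 (Nat.find_min hex ht)⟩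
  exact not_le.1 fun hle ↦ hc ((monotone_count h c hle).trans_lt (hopen c))

lemma IsAdmissible.exists_second_exhaustion (hh : IsAdmissible n h) {c : Fin 3} {τ : ℕ}
    (hτ : τ ≤ 3 * n) (hc : count h τ c = n) (hopen : ∀ t, AllOpen n t h ↔ t < τ) :
    ∃ σ, τ ≤ σ ∧ σ ≤ 3 * n ∧ (count h σ (c + 1) = n ∨ count h σ (c + 2) = n) ∧
      ∀ t ≤ 3 * n, OnlyExhausted n c t h ↔ τ ≤ t ∧ t < σ := by
  classical
  have hcn {t : ℕ} (hτt : τ ≤ t) (ht : t ≤ 3 * n) : count h t c = n :=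
    (hh.count_le ht c).antisymm (hc ▸ monotone_count h c hτt)
  have hend : ¬ (count h (3 * n) (c + 1) < n ∧ count h (3 * n) (c + 2) < n) := by
    have := count_add_count_add_count h (3 * n) c
    have := hcn hτ le_rfl
    omega
  have hex : ∃ t, ¬ (count h t (c + 1) < n ∧ count h t (c + 2) < n) := ⟨_, hend⟩
  set σ := Nat.find hex
  have hσ : σ ≤ 3 * n := Nat.find_min' hex hend
  have hspec : ¬ (count h σ (c + 1) < n ∧ count h σ (c + 2) < n) := Nat.find_spec hex
  have hτσ : τ ≤ σ := not_lt.1 fun hlt ↦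
    hspec ⟨(hopen _).2 hlt (c + 1), (hopen _).2 hlt (c + 2)⟩
  refine ⟨σ, hτσ, hσ, ?_, fun t ht ↦ ⟨fun hone ↦ ⟨?_, ?_⟩, fun hτt ↦ ?_⟩⟩
  · have := hh.count_le hσ (c + 1)
    have := hh.count_le hσ (c + 2)
    omega
  · exact not_lt.1 fun hlt ↦ ((hopen t).2 hlt c).ne hone.1
  · refine not_le.1 fun hle ↦ hspec ⟨?_, ?_⟩
    exacts [(monotone_count h _ hle).trans_lt hone.2.1, (monotone_count h _ hle).trans_lt hone.2.2]
  · exact ⟨hcn hτt.1 ht, not_not.1 (Nat.find_min hex hτt.2)⟩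

end Exhaustion

section Pathwise

/-- The maximum of the three coordinates of `v`. -/
noncomputable def max3 (v : Fin 3 → ℝ) : ℝ := max (v 0) (max (v 1) (v 2))

/-- The payoff in a round where only `c` is exhausted, centred by the chance `1 / 3` that the
restricted player plays `c + 1`; the answer `c + 1`, which a non-stupid player never gives, is
discarded. -/
def compensatedPayoff (c a b : Fin 3) : ℝ :=
  if b = c + 1 then 0 else payoff a b - if a = c + 1 then 1 else 0

/-- The change of `N (c + 2) - 2 * N (c + 1)` in a round where the restricted player plays `a`. It
has mean zero while only `c` is exhausted. -/
def imbalanceBet (c a : Fin 3) : ℝ := (if a = c + 2 then 1 else 0) - 2 * if a = c + 1 then 1 else 0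

/-- The total error made in replacing the score of the rounds `[s, 3n)` by the largest lead at
time `s`. -/
noncomputable def pathError (n s : ℕ) (h : History) : ℝ :=
  |gatedSum (AllOpen n) payoff s (3 * n) h| +
    ∑ c, |gatedSum (AllOpen n) (fun a _ ↦ leadIncrement c a) s (3 * n) h| +
    ∑ c, (|gatedSum (OnlyExhausted n c) (compensatedPayoff c) s (3 * n) h| +
      |gatedSum (OnlyExhausted n c) (fun a _ ↦ imbalanceBet c a) s (3 * n) h|)

variable {n s t : ℕ} {h : History}

lemma continuous_max3 : Continuous max3 := by
  unfold max3
  fun_prop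

lemma max3_div (v : Fin 3 → ℝ) {c : ℝ} (hc : 0 ≤ c) : max3 (fun i ↦ v i / c) = max3 v / c := by
  simp only [max3, max_div_div_right hc]

lemma max3_rotate (v : Fin 3 → ℝ) (c : Fin 3) :
    max3 v = max (v c) (max (v (c + 1)) (v (c + 2))) := by
  fin_cases c
  · rfl
  · simpa [max3, max_assoc] using max_comm (v 0) (max (v 1) (v 2))
  · simpa [max3] using (max_assoc (v 0) (v 1) (v 2)).symm.trans (max_comm _ _)

lemma abs_max3_sub_max3_le (v w : Fin 3 → ℝ) : |max3 v - max3 w| ≤ ∑ i, |v i - w i| := by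
  have h0 := abs_nonneg (v 0 - w 0)
  have h1 := abs_nonneg (v 1 - w 1)
  have h2 := abs_nonneg (v 2 - w 2)
  rw [Fin.sum_univ_three]
  refine (abs_max_sub_max_le_max _ _ _ _).trans (max_le (by linarith) ?_)
  exact (abs_max_sub_max_le_max _ _ _ _).trans (max_le (by linarith) (by linarith))

lemma eq_or_eq_add_one_or_eq_add_two (a c : Fin 3) : a = c ∨ a = c + 1 ∨ a = c + 2 := by
  decide +revert

lemma IsAdmissibleRound.payoff_eq_one {N : Fin 3 → ℕ} {x : Fin 3 × Fin 3} {a : Fin 3}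
    (hx : IsAdmissibleRound n N x) (hle : N a ≤ n) (h1 : N (a + 1) = n) (h2 : N (a + 2) = n) :
    payoff x.1 x.2 = 1 := by
  have hfst : x.1 = a := by
    rcases eq_or_eq_add_one_or_eq_add_two x.1 a with ha | ha | ha
    · exact ha
    · exact absurd (ha ▸ h1) hx.count_ne
    · exact absurd (ha ▸ h2) hx.count_ne
  have hsnd := hx.eq_of_two_exhausted a (hle.lt_of_ne (hfst ▸ hx.count_ne)) h1 h2
  simp [payoff, hfst, hsnd]

lemma IsAdmissible.sum_payoff_two_exhausted (hh : IsAdmissible n h) (ht : t ≤ 3 * n) {a : Fin 3}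
    (h1 : count h t (a + 1) = n) (h2 : count h t (a + 2) = n) :
    ∑ u ∈ Finset.Ico t (3 * n), payoff (h u).1 (h u).2 = n - count h t a := by
  have hcount (i : Fin 3) (hi : count h t i = n) (u : ℕ) (hu : u ∈ Finset.Ico t (3 * n)) :
      count h u i = n :=
    have hu := Finset.mem_Ico.1 hu
    (hh.count_le hu.2.le i).antisymm (hi ▸ monotone_count h i hu.1)
  have hwin : ∀ u ∈ Finset.Ico t (3 * n), payoff (h u).1 (h u).2 = 1 := fun u hu ↦
    have hu3 := (Finset.mem_Ico.1 hu).2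
    (hh u hu3).payoff_eq_one (hh.count_le hu3.le a) (hcount _ h1 u hu) (hcount _ h2 u hu)
  have htotal : (count h t a + n + n : ℝ) = t := by
    exact_mod_cast h1 ▸ h2 ▸ count_add_count_add_count h t a
  rw [Finset.sum_congr rfl hwin, Finset.sum_const, Nat.card_Ico, nsmul_one, Nat.cast_sub ht]
  push_cast
  linarith

lemma IsAdmissible.sum_payoff_one_exhausted (hh : IsAdmissible n h) {c : Fin 3} (hst : s ≤ t)
    (ht : t ≤ 3 * n) (hone : ∀ u, s ≤ u → u < t → OnlyExhausted n c u h) :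
    ∑ u ∈ Finset.Ico s t, payoff (h u).1 (h u).2 =
      ∑ u ∈ Finset.Ico s t, compensatedPayoff c (h u).1 (h u).2 +
        (count h t (c + 1) - count h s (c + 1)) := by
  rw [count_sub_count h hst, ← Finset.sum_add_distrib]
  refine Finset.sum_congr rfl fun u hu ↦ ?_
  obtain ⟨hsu, hut⟩ := Finset.mem_Ico.1 hu
  obtain ⟨hc, hc1, hc2⟩ := hone u hsu hut
  have hne := (hh u (hut.trans_le ht)).ne_of_one_exhausted c hc hc1 hc2
  rw [compensatedPayoff, if_neg hne, sub_add_cancel]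

lemma sum_imbalanceBet (h : History) (c : Fin 3) (hst : s ≤ t) :
    ∑ u ∈ Finset.Ico s t, imbalanceBet c (h u).1 =
      count h t (c + 2) - count h s (c + 2) - 2 * (count h t (c + 1) - count h s (c + 1)) := by
  simp only [count_sub_count h hst, imbalanceBet, Finset.sum_sub_distrib, Finset.mul_sum]

lemma max3_lead (h : History) {c : Fin 3} (hle : ∀ i, count h t i ≤ count h t c) :
    max3 (lead h t) = max (count h t c - count h t (c + 1) : ℝ) (lead h t (c + 1)) := by
  have h1 : (count h t (c + 1) : ℝ) ≤ count h t c := mod_cast hle (c + 1)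
  have h2 : (count h t (c + 2) : ℝ) ≤ count h t c := mod_cast hle (c + 2)
  have h2lead : lead h t (c + 2) = count h t (c + 2) - count h t c := by
    rw [lead, add_two_add_one]
  rw [max3_rotate _ c, max_comm (lead h t (c + 1)), ← max_assoc, max_eq_left (a := lead h t c)]
  · rfl
  · rw [h2lead, lead]
    linarith

lemma IsAdmissible.sum_payoff_after_second_exhaustion (hh : IsAdmissible n h) {c : Fin 3}
    (ht : t ≤ 3 * n) (hc : count h t c = n)
    (hsecond : count h t (c + 1) = n ∨ count h t (c + 2) = n) :
    ∑ u ∈ Finset.Ico t (3 * n), payoff (h u).1 (h u).2 =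
      (n - count h t (c + 1)) + (n - count h t (c + 2)) := by
  rcases hsecond with h1 | h2
  · rw [hh.sum_payoff_two_exhausted ht (a := c + 2) (by rwa [add_two_add_one])
      (by rwa [add_assoc, show (2 + 2 : Fin 3) = 1 from rfl]), h1, sub_self, zero_add]
  · rw [hh.sum_payoff_two_exhausted ht (a := c + 1)
      (by rwa [add_assoc, show (1 + 1 : Fin 3) = 2 from rfl])
      (by rwa [add_assoc, show (1 + 2 : Fin 3) = 0 from rfl, add_zero]), h2, sub_self, add_zero]

/-- With `x` and `y` plays of `c + 1` and `c + 2` left at the first exhaustion and `x₂`, `y₂` left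
at the second, the score is `x + y₂` up to the compensated payoffs. As `x₂ = 0` or `y₂ = 0`, this is
`max x (y - x)` up to the imbalance `2 * (x - x₂) - (y - y₂)`. -/
lemma IsAdmissible.abs_sum_payoff_sub_max3_lead_le (hh : IsAdmissible n h) {c : Fin 3} {τ σ : ℕ}
    (hτσ : τ ≤ σ) (hσ : σ ≤ 3 * n) (hc : count h τ c = n)
    (hsecond : count h σ (c + 1) = n ∨ count h σ (c + 2) = n)
    (hone : ∀ u, τ ≤ u → u < σ → OnlyExhausted n c u h) :
    |∑ u ∈ Finset.Ico τ (3 * n), payoff (h u).1 (h u).2 - max3 (lead h τ)| ≤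
      |∑ u ∈ Finset.Ico τ σ, compensatedPayoff c (h u).1 (h u).2| +
        |∑ u ∈ Finset.Ico τ σ, imbalanceBet c (h u).1| := by
  have hcσ : count h σ c = n := (hh.count_le hσ c).antisymm (hc ▸ monotone_count h c hτσ)
  have hle1 : (count h σ (c + 1) : ℝ) ≤ n := mod_cast hh.count_le hσ (c + 1)
  have hle2 : (count h σ (c + 2) : ℝ) ≤ n := mod_cast hh.count_le hσ (c + 2)
  have hsum := sum_imbalanceBet h c hτσ
  set e := ∑ u ∈ Finset.Ico τ σ, imbalanceBet c (h u).1
  have hlead : lead h τ (c + 1) = count h τ (c + 1) - count h τ (c + 2) := by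
    rw [lead, add_assoc, show (1 + 1 : Fin 3) = 2 from rfl]
  have hmax : (n - count h τ (c + 1)) + (n - count h σ (c + 2)) =
      max (n - count h τ (c + 1) : ℝ) (lead h τ (c + 1) - e) := by
    rcases hsecond with h1 | h2
    · rw [h1] at hsum
      rw [max_eq_right] <;> linarith
    · rw [h2] at hsum ⊢
      rw [max_eq_left] <;> linarith
  have hmax3 : max3 (lead h τ) = max (n - count h τ (c + 1) : ℝ) (lead h τ (c + 1)) := by
    rw [max3_lead h (fun i ↦ hc ▸ hh.count_le (hτσ.trans hσ) i), hc]
  have hdiff : |(n - count h τ (c + 1)) + (n - count h σ (c + 2)) - max3 (lead h τ)| ≤ |e| := by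
    rw [hmax, hmax3]
    simpa using abs_max_sub_max_le_max (n - count h τ (c + 1) : ℝ) (lead h τ (c + 1) - e)
      (n - count h τ (c + 1)) (lead h τ (c + 1))
  rw [← Finset.sum_Ico_consecutive _ hτσ hσ, hh.sum_payoff_one_exhausted hτσ hσ hone,
    hh.sum_payoff_after_second_exhaustion hσ hcσ hsecond]
  refine le_trans (le_of_eq ?_) ((abs_add_le _ _).trans (add_le_add_right hdiff _))
  congr 1
  ring

/-- While no move is exhausted, both the score and the leads fluctuate like fair sums. -/
theorem IsAdmissible.abs_sum_payoff_sub_max3_lead_le_pathError (hh : IsAdmissible n h)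
    (hs : AllOpen n s h) :
    |∑ u ∈ Finset.Ico s (3 * n), payoff (h u).1 (h u).2 - max3 (lead h s)| ≤ pathError n s h := by
  obtain ⟨c, τ, hτ, hc, hopen⟩ := hh.exists_first_exhaustion
  obtain ⟨σ, hτσ, hσ, hsecond, hone⟩ := hh.exists_second_exhaustion hτ hc hopen
  have hsτ : s ≤ τ := ((hopen s).1 hs).le
  have hphase1 (f : Fin 3 → Fin 3 → ℝ) : gatedSum (AllOpen n) f s (3 * n) h =
      ∑ u ∈ Finset.Ico s τ, f (h u).1 (h u).2 :=
    gatedSum_eq_sum_Ico (fun u hsu _ ↦ by rw [hopen, and_iff_right hsu]) le_rfl hτ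
  have hphase2 (f : Fin 3 → Fin 3 → ℝ) : gatedSum (OnlyExhausted n c) f s (3 * n) h =
      ∑ u ∈ Finset.Ico τ σ, f (h u).1 (h u).2 :=
    gatedSum_eq_sum_Ico (fun u _ hu ↦ hone u hu.le) hsτ hσ
  have hrest := hh.abs_sum_payoff_sub_max3_lead_le hτσ hσ hc hsecond
    fun u hu hu' ↦ (hone u (by omega)).2 ⟨hu, hu'⟩
  have hleads : |max3 (lead h τ) - max3 (lead h s)| ≤
      ∑ i, |gatedSum (AllOpen n) (fun a _ ↦ leadIncrement i a) s (3 * n) h| := by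
    simp only [hphase1, ← lead_sub_lead h hsτ]
    exact abs_max3_sub_max3_le _ _
  rw [← hphase2, ← hphase2 fun a _ ↦ imbalanceBet c a] at hrest
  have hsingle := Finset.single_le_sum (f := fun c ↦
      |gatedSum (OnlyExhausted n c) (compensatedPayoff c) s (3 * n) h| +
      |gatedSum (OnlyExhausted n c) (fun a _ ↦ imbalanceBet c a) s (3 * n) h|)
    (fun _ _ ↦ by positivity) (Finset.mem_univ c)
  rw [pathError, ← Finset.sum_Ico_consecutive _ hsτ hτ, ← hphase1]
  rw [add_sub_assoc, add_assoc]
  refine (abs_add_le _ _).trans (add_le_add_right ?_ _)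
  refine (abs_sub_le _ (max3 (lead h τ)) _).trans ?_
  linarith

end Pathwise

section Estimates

variable {Ω : Type*} [MeasurableSpace Ω] {n s t : ℕ} {μ : Measure Ω} {r m : ℕ → Ω → Fin 3}
  {h : History} {f : Fin 3 → Fin 3 → ℝ}

lemma dependsOn_allOpen (n t : ℕ) : DependsOn (AllOpen n t) (Set.Iio t) := fun h h' hh ↦ by
  simp only [AllOpen, dependsOn_count t hh]

lemma dependsOn_onlyExhausted (n : ℕ) (c : Fin 3) (t : ℕ) :
    DependsOn (OnlyExhausted n c t) (Set.Iio t) := fun h h' hh ↦ by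
  simp only [OnlyExhausted, dependsOn_count t hh]

lemma toReal_greedyProb_of_allOpen (hopen : AllOpen n t h) (a : Fin 3) :
    (greedyProb n (count h t) a).toReal = 1 / 3 := by
  have hk : (Finset.univ.filter fun i ↦ count h t i = n).card = 0 := by
    simpa [Finset.filter_eq_empty_iff] using fun i ↦ (hopen i).ne
  simp [greedyProb, hk]

lemma sum_greedyProb_mul_of_onlyExhausted {c : Fin 3} (hone : OnlyExhausted n c t h)
    (v : Fin 3 → ℝ) :
    ∑ a, (greedyProb n (count h t) a).toReal * v a = (v (c + 1) + 2 * v (c + 2)) / 3 := by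
  obtain ⟨hc, hc1, hc2⟩ := hone
  have hk : (Finset.univ.filter fun i ↦ count h t i = n).card = 1 := by
    refine Finset.card_eq_one.2 ⟨c, Finset.ext fun i ↦ ?_⟩
    rcases eq_or_eq_add_one_or_eq_add_two i c with rfl | rfl | rfl <;>
      simp [hc, hc1.ne, hc2.ne]
  rw [sum_univ_fin_three_rotate _ c]
  simp only [greedyProb, hk, hc, hc1.ne, hc2.ne, add_two_add_one, if_true, if_false, one_ne_zero,
    add_assoc c 1 1, show (1 + 1 : Fin 3) = 2 from rfl]
  simp
  ring

lemma isFairBet_allOpen (hf : ∀ b, ∑ a, f a b = 0) : IsFairBet n (AllOpen n) f where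
  dependsOn := dependsOn_allOpen n
  mean_eq_zero u h hopen b := by
    simp only [toReal_greedyProb_of_allOpen hopen, ← Finset.mul_sum, hf, mul_zero]

lemma isFairBet_onlyExhausted {c : Fin 3} (hf : ∀ b, f (c + 1) b + 2 * f (c + 2) b = 0) :
    IsFairBet n (OnlyExhausted n c) f where
  dependsOn := dependsOn_onlyExhausted n c
  mean_eq_zero u h hone b := by
    rw [sum_greedyProb_mul_of_onlyExhausted hone fun a ↦ f a b, hf, zero_div]

lemma sum_payoff_eq_zero (b : Fin 3) : ∑ a, payoff a b = 0 := by
  fin_cases b <;> simp [payoff, Fin.sum_univ_three]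

lemma sum_leadIncrement_eq_zero (i : Fin 3) : ∑ a, leadIncrement i a = 0 := by
  simp [leadIncrement]

lemma compensatedPayoff_fair (c b : Fin 3) :
    compensatedPayoff c (c + 1) b + 2 * compensatedPayoff c (c + 2) b = 0 := by
  fin_cases c <;> fin_cases b <;> simp [compensatedPayoff, payoff] <;> norm_num

lemma imbalanceBet_fair (c : Fin 3) : imbalanceBet c (c + 1) + 2 * imbalanceBet c (c + 2) = 0 := by
  simp [imbalanceBet]

lemma abs_payoff_le (a b : Fin 3) : |payoff a b| ≤ 1 := by
  unfold payoff
  split_ifs <;> norm_num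

lemma abs_leadIncrement_le (i a : Fin 3) : |leadIncrement i a| ≤ 1 := by
  unfold leadIncrement
  split_ifs <;> norm_num

lemma abs_compensatedPayoff_le (c a b : Fin 3) : |compensatedPayoff c a b| ≤ 2 := by
  have hpayoff := abs_le.1 (abs_payoff_le a b)
  unfold compensatedPayoff
  split_ifs <;> rw [abs_le] <;> constructor <;> linarith

lemma abs_imbalanceBet_le (c a : Fin 3) : |imbalanceBet c a| ≤ 2 := by
  unfold imbalanceBet
  split_ifs <;> norm_num

lemma dependsOn_pathError (n s : ℕ) : DependsOn (pathError n s) (Set.Iio (3 * n)) :=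
  fun h h' hh ↦ by
    simp only [pathError, dependsOn_gatedSum (dependsOn_allOpen n) s (3 * n) hh,
      dependsOn_gatedSum (dependsOn_onlyExhausted n _) s (3 * n) hh]

theorem integral_pathError_le (H : IsGreedyVsNonStupid n μ r m) (hs : s ≤ 3 * n) :
    ∫ ω, pathError n s (history r m ω) ∂μ ≤ 16 * √(3 * n - s) := by
  obtain ⟨_, hr, hm, -⟩ := id H
  have hint {G : ℕ → History → Prop} (hG : ∀ u, DependsOn (G u) (Set.Iio u))
      (f : Fin 3 → Fin 3 → ℝ) :
      Integrable (fun ω ↦ |gatedSum G f s (3 * n) (history r m ω)|) μ :=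
    (integrable_comp_history hr hm (dependsOn_gatedSum hG s _)).abs
  have hopen (f) := hint (dependsOn_allOpen n) f
  have hone (c f) := hint (dependsOn_onlyExhausted n c) f
  have hpayoff := (isFairBet_allOpen (n := n) sum_payoff_eq_zero).integral_abs_gatedSum_le H
    abs_payoff_le hs le_rfl
  have hlead (c) := (isFairBet_allOpen (n := n) (f := fun a _ ↦ leadIncrement c a)
    fun _ ↦ sum_leadIncrement_eq_zero c).integral_abs_gatedSum_le H
    (fun a _ ↦ abs_leadIncrement_le c a) hs le_rfl
  have hcomp (c) := (isFairBet_onlyExhausted (n := n)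
    (compensatedPayoff_fair c)).integral_abs_gatedSum_le H (abs_compensatedPayoff_le c) hs le_rfl
  have himb (c) := (isFairBet_onlyExhausted (n := n) (f := fun a _ ↦ imbalanceBet c a)
    fun _ ↦ imbalanceBet_fair c).integral_abs_gatedSum_le H
    (fun a _ ↦ abs_imbalanceBet_le c a) hs le_rfl
  push_cast at hpayoff hlead hcomp himb
  have hadd {X Y : Ω → ℝ} (hX : Integrable X μ) (hY : Integrable Y μ) :
      Integrable (fun ω ↦ X ω + Y ω) μ := hX.add hY
  have hleadSum := integrable_finsetSum Finset.univ
    fun c _ ↦ hopen fun a _ ↦ leadIncrement c a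
  have honeSum (c) := hadd (hone c (compensatedPayoff c)) (hone c fun a _ ↦ imbalanceBet c a)
  simp only [pathError]
  rw [integral_add (hadd (hopen _) hleadSum) (integrable_finsetSum _ fun c _ ↦ honeSum c),
    integral_add (hopen _) hleadSum, integral_finsetSum _ fun c _ ↦ hopen _,
    integral_finsetSum _ fun c _ ↦ honeSum c]
  simp only [integral_add (hone _ _) (hone _ _), Fin.sum_univ_three]
  linarith [hlead 0, hlead 1, hlead 2, hcomp 0, hcomp 1, hcomp 2, himb 0, himb 1, himb 2]

theorem measureReal_le_abs_score_sub_score_sub_max3_lead_le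
    (H : IsGreedyVsNonStupid n μ r m) (hs : s ≤ 3 * n) {δ : ℝ} (hδ : 0 < δ) :
    μ.real {ω | δ ≤ |((score r m (3 * n) ω - score r m s ω : ℤ) : ℝ)
        - max3 (lead (history r m ω) s)|} ≤
      μ.real {ω | ¬ AllOpen n s (history r m ω)} + 16 * √(3 * n - s) / δ := by
  obtain ⟨_, hr, hm, -⟩ := id H
  have hsub : μ.real {ω | δ ≤ |((score r m (3 * n) ω - score r m s ω : ℤ) : ℝ)
        - max3 (lead (history r m ω) s)|} ≤
      μ.real ({ω | ¬ AllOpen n s (history r m ω)} ∪ {ω | δ ≤ pathError n s (history r m ω)}) := by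
    refine ENNReal.toReal_mono (measure_ne_top _ _) (measure_mono_ae ?_)
    filter_upwards [ae_isAdmissible H] with ω hω hle
    refine or_iff_not_imp_left.2 fun hopen ↦ hle.trans ?_
    rw [score_sub_score_eq_sum r m hs]
    exact hω.abs_sum_payoff_sub_max3_lead_le_pathError (not_not.1 hopen)
  have hmarkov : μ.real {ω | δ ≤ pathError n s (history r m ω)} ≤ 16 * √(3 * n - s) / δ := by
    rw [le_div_iff₀ hδ, mul_comm]
    refine (mul_meas_ge_le_integral_of_nonneg (ae_of_all _ fun ω ↦ ?_)
      (integrable_comp_history hr hm (dependsOn_pathError n s)) δ).trans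
        (integral_pathError_le H hs)
    simp only [pathError, Pi.zero_apply]
    positivity
  exact hsub.trans ((measureReal_union_le _ _).trans (by gcongr))

/-- The increment of `3 * N i - t` in a round where the restricted player plays `a`. -/
def countBet (i a : Fin 3) : ℝ := 3 * (if a = i then 1 else 0) - 1

lemma isFairBet_countBet (i : Fin 3) : IsFairBet n (AllOpen n) fun a _ ↦ countBet i a :=
  isFairBet_allOpen fun _ ↦ by simp [countBet]

lemma abs_countBet_le (i a : Fin 3) : |countBet i a| ≤ 2 := by
  unfold countBet
  split_ifs <;> norm_num

/-- If a move `c` is exhausted at a time `τ ≤ t`, then `3 * N c - τ` is `3 * n - τ ≥ 3 * n - t`. -/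
lemma IsAdmissible.sq_le_sum_sq_countBet (hh : IsAdmissible n h) (ht : t ≤ 3 * n)
    (hclosed : ¬ AllOpen n t h) :
    (3 * n - t : ℝ) ^ 2 ≤ ∑ i, gatedSum (AllOpen n) (fun a _ ↦ countBet i a) 0 t h ^ 2 := by
  obtain ⟨c, τ, -, hc, hopen⟩ := hh.exists_first_exhaustion
  have hτt : τ ≤ t := not_lt.1 (mt (hopen t).2 hclosed)
  have hsum : gatedSum (AllOpen n) (fun a _ ↦ countBet c a) 0 t h = 3 * n - τ := by
    rw [gatedSum_eq_sum_Ico (fun u _ _ ↦ by rw [hopen, and_iff_right u.zero_le]) le_rfl hτt]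
    have hcount := count_sub_count h τ.zero_le c
    simp only [countBet, Finset.sum_sub_distrib, ← Finset.mul_sum, ← hcount, hc]
    simp [count]
  have hτ : (τ : ℝ) ≤ t := mod_cast hτt
  have ht' : (t : ℝ) ≤ 3 * n := mod_cast ht
  calc (3 * n - t : ℝ) ^ 2 ≤ (3 * n - τ) ^ 2 := by gcongr
    _ ≤ _ := hsum ▸ Finset.single_le_sum
      (f := fun i ↦ gatedSum (AllOpen n) (fun a _ ↦ countBet i a) 0 t h ^ 2)
      (fun _ _ ↦ sq_nonneg _) (Finset.mem_univ c)

theorem sq_mul_real_not_allOpen_le (H : IsGreedyVsNonStupid n μ r m) (ht : t ≤ 3 * n) :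
    (3 * n - t : ℝ) ^ 2 * μ.real {ω | ¬ AllOpen n t (history r m ω)} ≤ 12 * t := by
  obtain ⟨_, hr, hm, -⟩ := id H
  have hint (i : Fin 3) : Integrable (fun ω ↦
      gatedSum (AllOpen n) (fun a _ ↦ countBet i a) 0 t (history r m ω) ^ 2) μ :=
    integrable_comp_history hr hm fun h h' hh ↦
      congrArg (· ^ 2) (dependsOn_gatedSum (dependsOn_allOpen n) 0 t hh)
  have hmarkov := mul_meas_ge_le_integral_of_nonneg (μ := μ)
    (f := fun ω ↦ ∑ i, gatedSum (AllOpen n) (fun a _ ↦ countBet i a) 0 t (history r m ω) ^ 2)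
    (ae_of_all μ fun ω ↦ Finset.sum_nonneg fun i _ ↦ sq_nonneg _)
    (integrable_finsetSum _ fun i _ ↦ hint i) ((3 * n - t : ℝ) ^ 2)
  have hsub : μ.real {ω | ¬ AllOpen n t (history r m ω)} ≤ μ.real {ω | (3 * n - t : ℝ) ^ 2 ≤
      ∑ i, gatedSum (AllOpen n) (fun a _ ↦ countBet i a) 0 t (history r m ω) ^ 2} := by
    refine ENNReal.toReal_mono (measure_ne_top _ _) (measure_mono_ae ?_)
    filter_upwards [ae_isAdmissible H] with ω hω
    exact hω.sq_le_sum_sq_countBet ht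
  calc (3 * n - t : ℝ) ^ 2 * μ.real {ω | ¬ AllOpen n t (history r m ω)}
      ≤ ∫ ω, ∑ i, gatedSum (AllOpen n) (fun a _ ↦ countBet i a) 0 t (history r m ω) ^ 2 ∂μ :=
        (mul_le_mul_of_nonneg_left hsub (sq_nonneg _)).trans hmarkov
    _ = ∑ i, ∫ ω, gatedSum (AllOpen n) (fun a _ ↦ countBet i a) 0 t (history r m ω) ^ 2 ∂μ :=
        integral_finsetSum _ fun i _ ↦ hint i
    _ ≤ ∑ i : Fin 3, 2 ^ 2 * ((t : ℝ) - (0 : ℕ)) := Finset.sum_le_sum fun i _ ↦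
        (isFairBet_countBet i).integral_sq_gatedSum_le H (fun a _ ↦ abs_countBet_le i a)
          t.zero_le ht
    _ = 12 * t := by
        rw [Fin.sum_const]
        norm_num
        ring

end Estimates

section CharacteristicFunctions

variable {Ω : Type*} [MeasurableSpace Ω] {n t : ℕ} {μ : Measure Ω} {r m : ℕ → Ω → Fin 3}
  {ψ : Fin 3 → Fin 3 → ℂ} {z : ℂ}

lemma AllOpen.mono {s t : ℕ} {h : History} (hopen : AllOpen n t h) (hst : s ≤ t) :
    AllOpen n s h :=
  fun i ↦ (monotone_count h i hst).trans_lt (hopen i)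

open Classical in
/-- The product of the factors `ψ` of the rounds before `t`, where the factor of a round with an
exhausted move is replaced by the mean `z`. -/
noncomputable def stoppedProd (n : ℕ) (ψ : Fin 3 → Fin 3 → ℂ) (z : ℂ) (t : ℕ) (h : History) : ℂ :=
  ∏ u ∈ Finset.range t, if AllOpen n u h then ψ (h u).1 (h u).2 else z

lemma dependsOn_stoppedProd (n : ℕ) (ψ : Fin 3 → Fin 3 → ℂ) (z : ℂ) (t : ℕ) :
    DependsOn (stoppedProd n ψ z t) (Set.Iio t) := by
  classical
  refine fun h h' hh ↦ Finset.prod_congr rfl fun u hu ↦ ?_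
  have hut := Finset.mem_range.1 hu
  rw [hh u hut, dependsOn_allOpen n u fun v hv ↦ hh v (lt_trans hv hut)]

lemma norm_stoppedProd_le (hψ : ∀ a b, ‖ψ a b‖ ≤ 1) (hz : ‖z‖ ≤ 1) (t : ℕ) (h : History) :
    ‖stoppedProd n ψ z t h‖ ≤ 1 := by
  rw [stoppedProd, norm_prod]
  refine Finset.prod_le_one (fun _ _ ↦ norm_nonneg _) fun u _ ↦ ?_
  split_ifs
  exacts [hψ _ _, hz]

lemma stoppedProd_of_allOpen {h : History} (hopen : AllOpen n t h) :
    stoppedProd n ψ z t h = ∏ u ∈ Finset.range t, ψ (h u).1 (h u).2 :=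
  Finset.prod_congr rfl fun _ hu ↦ if_pos (hopen.mono (Finset.mem_range.1 hu).le)

lemma integral_stoppedProd (H : IsGreedyVsNonStupid n μ r m)
    (hsum : ∀ b, ∑ a, ψ a b = 3 * z) (ht : t ≤ 3 * n) :
    ∫ ω, stoppedProd n ψ z t (history r m ω) ∂μ = z ^ t := by
  classical
  obtain ⟨_, hr, hm, -⟩ := id H
  induction t with
  | zero => simp [stoppedProd]
  | succ t ih =>
    have hprod := dependsOn_stoppedProd n ψ z t
    set F : History → Fin 3 → Fin 3 → ℂ := fun h a b ↦
      stoppedProd n ψ z t h * if AllOpen n t h then ψ a b - z else 0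
    have hF : DependsOn F (Set.Iio t) := fun h h' hh ↦ by
      simp only [F, hprod hh, dependsOn_allOpen n t hh]
    have hmean (h : History) (b : Fin 3) :
        ∑ a, (greedyProb n (count h t) a).toReal • F h a b = 0 := by
      by_cases hopen : AllOpen n t h
      · simp only [F, hopen, if_true, toReal_greedyProb_of_allOpen hopen, ← Finset.smul_sum,
          ← Finset.mul_sum, Finset.sum_sub_distrib, hsum]
        simp
      · simp [F, hopen]
    have hsplit (h : History) : stoppedProd n ψ z (t + 1) h =
        z * stoppedProd n ψ z t h + F h (h t).1 (h t).2 := by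
      simp only [stoppedProd, Finset.prod_range_succ, F]
      split_ifs <;> ring
    have hFint : Integrable (fun ω ↦ F (history r m ω) (r t ω) (m t ω)) μ :=
      integrable_comp_history (t := t + 1) hr hm (F := fun h ↦ F h (h t).1 (h t).2)
        fun h h' hh ↦ by
          simp only [hF.mono (Set.Iio_subset_Iio t.le_succ) hh, hh t (Set.mem_Iio.2 t.lt_succ_self)]
    calc ∫ ω, stoppedProd n ψ z (t + 1) (history r m ω) ∂μ
        = ∫ ω, z * stoppedProd n ψ z t (history r m ω) + F (history r m ω) (r t ω) (m t ω) ∂μ := by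
          simp only [hsplit, history]
      _ = z * z ^ t + 0 := by
          rw [integral_add ((integrable_comp_history hr hm hprod).const_mul z) hFint,
            integral_const_mul, ih (by omega), integral_greedy H ht hF]
          simp only [hmean, integral_zero]
      _ = z ^ (t + 1) := by ring

/-- While no move is exhausted, the factors `ψ` have conditional mean `z` whatever the unrestricted
player does, so that their products average as if the rounds were independent. -/
theorem norm_integral_prod_sub_pow_le (H : IsGreedyVsNonStupid n μ r m)
    (hψ : ∀ a b, ‖ψ a b‖ ≤ 1) (hsum : ∀ b, ∑ a, ψ a b = 3 * z) (ht : t ≤ 3 * n) :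
    ‖∫ ω, ∏ u ∈ Finset.range t, ψ (r u ω) (m u ω) ∂μ - z ^ t‖ ≤
      2 * μ.real {ω | ¬ AllOpen n t (history r m ω)} := by
  obtain ⟨_, hr, hm, -⟩ := id H
  have hz : ‖z‖ ≤ 1 := by
    have hnorm : ‖(3 : ℂ) * z‖ ≤ ∑ a : Fin 3, 1 :=
      hsum 0 ▸ (norm_sum_le _ _).trans (Finset.sum_le_sum fun a _ ↦ hψ a 0)
    rw [norm_mul] at hnorm
    norm_num at hnorm
    linarith
  have hprod : Integrable (fun ω ↦ ∏ u ∈ Finset.range t, ψ (r u ω) (m u ω)) μ :=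
    integrable_comp_history (t := t) hr hm (F := fun h ↦ ∏ u ∈ Finset.range t, ψ (h u).1 (h u).2)
      fun h h' hh ↦ Finset.prod_congr rfl fun u hu ↦ by rw [hh u (Finset.mem_range.1 hu)]
  have hmeas : MeasurableSet {ω | ¬ AllOpen n t (history r m ω)} :=
    (measurable_comp_history hr hm (dependsOn_allOpen n t)).setOf.compl
  rw [← integral_stoppedProd H hsum ht, ← integral_sub hprod
    (integrable_comp_history hr hm (dependsOn_stoppedProd n ψ z t))]
  refine (norm_integral_le_integral_norm _).trans ?_
  rw [mul_comm, ← smul_eq_mul, ← setIntegral_const, ← integral_indicator hmeas]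
  refine integral_mono_of_nonneg (ae_of_all _ fun _ ↦ norm_nonneg _)
    ((integrable_const _).indicator hmeas) (ae_of_all _ fun ω ↦ ?_)
  by_cases hopen : AllOpen n t (history r m ω)
  · simp [hopen, stoppedProd_of_allOpen hopen, history]
  · simp only [Set.indicator, Set.mem_ofPred_eq, hopen, not_false_eq_true, if_true]
    have hle : ‖∏ u ∈ Finset.range t, ψ (r u ω) (m u ω)‖ ≤ 1 := by
      rw [norm_prod]
      exact Finset.prod_le_one (fun _ _ ↦ norm_nonneg _) fun _ _ ↦ hψ _ _
    refine (norm_sub_le _ _).trans ?_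
    linarith [norm_stoppedProd_le (n := n) hψ hz t (history r m ω)]

end CharacteristicFunctions

section Asymptotics

open Asymptotics

lemma tendsto_pow_exp_of_tendsto_mul_sub_one {ι : Type*} {l : Filter ι} {T : ι → ℕ} {z : ι → ℂ}
    {L : ℂ} (hz : Tendsto z l (𝓝 1)) (hT : Tendsto (fun k ↦ T k * (z k - 1)) l (𝓝 L)) :
    Tendsto (fun k ↦ z k ^ T k) l (𝓝 (Complex.exp L)) := by
  have hderiv : HasDerivAt Complex.log 1 1 := by
    simpa using Complex.hasDerivAt_log Complex.one_mem_slitPlane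
  have hslope : Tendsto (fun k ↦ dslope Complex.log 1 (z k)) l (𝓝 1) := by
    have hcont := continuousAt_dslope_same.2 hderiv.differentiableAt
    simpa [ContinuousAt, hderiv.deriv, Function.comp_def] using hcont.tendsto.comp hz
  have hlog : Tendsto (fun k ↦ T k * Complex.log (z k)) l (𝓝 L) := by
    have hfactor (w : ℂ) : Complex.log w = (w - 1) * dslope Complex.log 1 w := by
      simpa using (sub_smul_dslope Complex.log 1 w).symm
    simpa only [hfactor, mul_assoc, mul_one] using hT.mul hslope
  refine ((Complex.continuous_exp.tendsto L).comp hlog).congr' ?_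
  filter_upwards [hz.eventually_ne one_ne_zero] with k hk
  rw [Function.comp_apply, Complex.exp_nat_mul, Complex.exp_log hk]

/-- The characteristic function at `x` of the uniform distribution on the three values of `v`. -/
noncomputable def uniformCharFun (v : Fin 3 → ℝ) (x : ℝ) : ℂ :=
  (∑ j, Complex.exp ((v j * x : ℝ) * Complex.I)) / 3

lemma uniformCharFun_sub_taylor_isLittleO {v : Fin 3 → ℝ} (hv : ∑ j, v j = 0) :
    (fun x ↦ uniformCharFun v x - 1 + ((∑ j, v j ^ 2) * x ^ 2 / 6 : ℝ)) =o[𝓝 0]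
      fun x ↦ x ^ 2 := by
  have hexp (y : ℝ) : (fun x : ℝ ↦ Complex.exp ((y * x : ℝ) * Complex.I) -
      (1 + (y * x : ℝ) * Complex.I - ((y * x) ^ 2 / 2 : ℝ))) =o[𝓝 0] fun x ↦ x ^ 2 := by
    have hlim : Tendsto (fun x : ℝ ↦ ((y * x : ℝ) : ℂ) * Complex.I) (𝓝 0) (𝓝 0) :=
      Continuous.tendsto' (by fun_prop) _ _ (by simp)
    have htaylor := (Complex.exp_sub_sum_range_succ_isLittleO_pow 2).comp_tendsto hlim
    refine IsLittleO.trans_isBigO (htaylor.congr_left fun x ↦ ?_) ?_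
    · simp [Finset.sum_range_succ, mul_pow]
      ring
    · refine IsBigO.of_bound (y ^ 2) (Eventually.of_forall fun x ↦ le_of_eq ?_)
      simp [mul_pow]
  refine ((IsLittleO.sum fun j (_ : j ∈ Finset.univ) ↦ hexp (v j)).const_mul_left
    (1 / 3)).congr_left fun x ↦ ?_
  have hv' : ∑ j, (v j : ℂ) = 0 := mod_cast hv
  simp only [uniformCharFun, Fin.sum_univ_three, Pi.add_apply] at hv' ⊢
  push_cast
  linear_combination -(1 / 3 : ℂ) * x * Complex.I * hv'

lemma tendsto_uniformCharFun_pow {v : Fin 3 → ℝ} (hv : ∑ j, v j = 0) {ι : Type*} {l : Filter ι}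
    {T : ι → ℕ} {a : ι → ℝ} {c : ℝ} (ha : Tendsto a l (𝓝 0))
    (hT : Tendsto (fun k ↦ T k * a k ^ 2) l (𝓝 c)) :
    Tendsto (fun k ↦ uniformCharFun v (a k) ^ T k) l
      (𝓝 (Complex.exp (-(c * (∑ j, v j ^ 2) / 6 : ℝ)))) := by
  refine tendsto_pow_exp_of_tendsto_mul_sub_one ?_ ?_
  · have hcont : Continuous (uniformCharFun v) := by
      unfold uniformCharFun
      fun_prop
    exact (hcont.tendsto' 0 1 (by simp [uniformCharFun])).comp ha
  · have htaylor : Tendsto (fun k ↦ (T k : ℂ) * (uniformCharFun v (a k) - 1 +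
        ((∑ j, v j ^ 2) * a k ^ 2 / 6 : ℝ))) l (𝓝 0) := by
      have hlittle := (uniformCharFun_sub_taylor_isLittleO hv).comp_tendsto ha
      have hbig : (fun k ↦ (T k : ℝ) * a k ^ 2) =O[l] fun _ ↦ (1 : ℝ) := hT.isBigO_one ℝ
      refine (isLittleO_one_iff ℝ).1 (IsLittleO.trans_isBigO ?_ hbig)
      exact IsBigO.mul_isLittleO (.of_bound 1 (by simp)) hlittle
    have hquad : Tendsto (fun k ↦ (((T k * a k ^ 2) * (∑ j, v j ^ 2) / 6 : ℝ) : ℂ)) l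
        (𝓝 (c * (∑ j, v j ^ 2) / 6 : ℝ)) :=
      (Complex.continuous_ofReal.tendsto _).comp ((hT.mul_const _).div_const 6)
    simpa using (htaylor.sub hquad).congr fun k ↦ by push_cast; ring

end Asymptotics

section ConvergenceInDistribution

lemma tendstoInDistribution_congr_identDistrib {ι E Ω' : Type*} {Ω Ω₁ : ι → Type*}
    [∀ k, MeasurableSpace (Ω k)] [∀ k, MeasurableSpace (Ω₁ k)] [MeasurableSpace Ω']
    {μ : ∀ k, Measure (Ω k)} [∀ k, IsProbabilityMeasure (μ k)]
    {ν : ∀ k, Measure (Ω₁ k)} [∀ k, IsProbabilityMeasure (ν k)]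
    {P : Measure Ω'} [IsProbabilityMeasure P]
    [TopologicalSpace E] [MeasurableSpace E] [OpensMeasurableSpace E] {l : Filter ι}
    {X : ∀ k, Ω k → E} {Y : ∀ k, Ω₁ k → E} {Z : Ω' → E}
    (hXY : ∀ k, IdentDistrib (X k) (Y k) (μ k) (ν k)) (hX : TendstoInDistribution X l Z μ P) :
    TendstoInDistribution Y l Z ν P where
  forall_aemeasurable k := (hXY k).aemeasurable_snd
  aemeasurable_limit := hX.aemeasurable_limit
  tendsto := hX.tendsto.congr fun k ↦ Subtype.ext (hXY k).map_eq

/-- Slutsky's theorem on varying probability spaces: Mathlib's version on a fixed space is applied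
on the product of all the spaces. -/
lemma tendstoInDistribution_of_tendsto_measure_sub {ι E Ω' : Type*} {Ω : ι → Type*}
    [∀ k, MeasurableSpace (Ω k)] [MeasurableSpace Ω']
    {μ : ∀ k, Measure (Ω k)} [∀ k, IsProbabilityMeasure (μ k)]
    {P : Measure Ω'} [IsProbabilityMeasure P]
    [NormedAddCommGroup E] [SecondCountableTopology E] [MeasurableSpace E] [BorelSpace E]
    {l : Filter ι} [l.IsCountablyGenerated] {X Y : ∀ k, Ω k → E} {Z : Ω' → E}
    (hX : TendstoInDistribution X l Z μ P) (hY : ∀ k, AEMeasurable (Y k) (μ k))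
    (hXY : ∀ ε > 0, Tendsto (fun k ↦ μ k {ω | ε ≤ ‖Y k ω - X k ω‖}) l (𝓝 0)) :
    TendstoInDistribution Y l Z μ P := by
  have hlift (W : ∀ k, Ω k → E) (hW : ∀ k, AEMeasurable (W k) (μ k)) (k : ι) :
      IdentDistrib (W k) (fun ω : ∀ k, Ω k ↦ W k (ω k)) (μ k) (Measure.infinitePi μ) := by
    have heval := measurePreserving_eval_infinitePi μ k
    refine ⟨hW k, (hW k).comp_quasiMeasurePreserving heval.quasiMeasurePreserving, ?_⟩
    conv_lhs => rw [← heval.map_eq]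
    exact AEMeasurable.map_map_of_aemeasurable (heval.map_eq.symm ▸ hW k) heval.aemeasurable
  have hXm := hX.forall_aemeasurable
  refine tendstoInDistribution_congr_identDistrib (fun k ↦ (hlift Y hY k).symm) ?_
  refine tendstoInDistribution_of_tendstoInMeasure_sub _ Z
    (tendstoInDistribution_congr_identDistrib (hlift X hXm) hX) ?_
    fun k ↦ (hlift Y hY k).aemeasurable_snd
  rw [tendstoInMeasure_iff_norm]
  refine fun ε hε ↦ (hXY ε hε).congr fun k ↦ ?_
  have heval := measurePreserving_eval_infinitePi μ k
  have hset : NullMeasurableSet {ω | ε ≤ ‖Y k ω - X k ω‖} (μ k) :=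
    nullMeasurableSet_le aemeasurable_const ((hY k).sub (hXm k)).norm
  simpa using (heval.measure_preimage hset).symm

lemma tendsto_integral_comp_of_tendstoInDistribution {ι E Ω' : Type*} {Ω : ι → Type*}
    [∀ k, MeasurableSpace (Ω k)] [MeasurableSpace Ω']
    {μ : ∀ k, Measure (Ω k)} [∀ k, IsProbabilityMeasure (μ k)]
    {P : Measure Ω'} [IsProbabilityMeasure P]
    [TopologicalSpace E] [MeasurableSpace E] [OpensMeasurableSpace E] {l : Filter ι}
    {X : ∀ k, Ω k → E} {Z : Ω' → E} (h : TendstoInDistribution X l Z μ P)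
    (g : BoundedContinuousFunction E ℝ) :
    Tendsto (fun k ↦ ∫ ω, g (X k ω) ∂μ k) l (𝓝 (∫ ω, g (Z ω) ∂P)) := by
  have hlim := ProbabilityMeasure.tendsto_iff_forall_integral_tendsto.1 h.tendsto g
  simpa [integral_map, h.forall_aemeasurable, h.aemeasurable_limit,
    g.continuous.aestronglyMeasurable] using hlim

lemma charFun_map_inner_one {E Ω : Type*} [MeasurableSpace Ω] {μ : Measure Ω}
    [NormedAddCommGroup E] [InnerProductSpace ℝ E] [MeasurableSpace E] [BorelSpace E]
    [SecondCountableTopology E] {X : Ω → E} (hX : AEMeasurable X μ) (θ : E) :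
    charFun (μ.map fun ω ↦ inner ℝ θ (X ω)) 1 = charFun (μ.map X) θ := by
  rw [charFun_apply, charFun_apply, integral_map (by fun_prop) (by fun_prop),
    integral_map hX (by fun_prop)]
  simp [real_inner_comm]

lemma aemeasurable_of_forall_inner {E Ω : Type*} [MeasurableSpace Ω] {μ : Measure Ω}
    [NormedAddCommGroup E] [InnerProductSpace ℝ E] [FiniteDimensional ℝ E] [MeasurableSpace E]
    [BorelSpace E] {X : Ω → E} (h : ∀ θ, AEMeasurable (fun ω ↦ inner ℝ θ (X ω)) μ) :
    AEMeasurable X μ := by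
  have hrepr : X = fun ω ↦ ∑ i, inner ℝ (stdOrthonormalBasis ℝ E i) (X ω) •
      stdOrthonormalBasis ℝ E i :=
    funext fun ω ↦ ((stdOrthonormalBasis ℝ E).sum_repr' (X ω)).symm
  rw [hrepr]
  exact Finset.aemeasurable_fun_sum _ fun i _ ↦ (h _).smul_const _

/-- The Cramér–Wold device. -/
lemma tendstoInDistribution_of_forall_inner {E Ω' : Type*} {Ω : ℕ → Type*}
    [∀ k, MeasurableSpace (Ω k)] [MeasurableSpace Ω']
    {μ : ∀ k, Measure (Ω k)} [∀ k, IsProbabilityMeasure (μ k)]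
    {P : Measure Ω'} [IsProbabilityMeasure P]
    [NormedAddCommGroup E] [InnerProductSpace ℝ E] [FiniteDimensional ℝ E] [MeasurableSpace E]
    [BorelSpace E] {X : ∀ k, Ω k → E} {Z : Ω' → E}
    (h : ∀ θ, TendstoInDistribution (fun k ω ↦ inner ℝ θ (X k ω)) atTop
      (fun ω ↦ inner ℝ θ (Z ω)) μ P) :
    TendstoInDistribution X atTop Z μ P := by
  have hX (k : ℕ) := aemeasurable_of_forall_inner fun θ ↦ (h θ).forall_aemeasurable k
  have hZ := aemeasurable_of_forall_inner fun θ ↦ (h θ).aemeasurable_limit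
  refine ⟨hX, hZ, ProbabilityMeasure.tendsto_of_tendsto_charFun fun θ ↦ ?_⟩
  simpa [charFun_map_inner_one, hX, hZ] using
    ProbabilityMeasure.tendsto_iff_tendsto_charFun.1 (h θ).tendsto 1

end ConvergenceInDistribution

section Cutoff

open Asymptotics

/-- The rounds `T k` in games of `3 * N k` rounds are early enough that no move is exhausted before
them with high probability, and late enough that the increments of the score after them which have
mean zero are negligible with respect to `√(N k)`. -/
structure IsCutoff (N T : ℕ → ℕ) : Prop where
  le : ∀ k, T k ≤ 3 * N k
  tendsto_atTop : Tendsto N atTop atTop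
  sqrt_isLittleO : (fun k ↦ √(N k)) =o[atTop] fun k ↦ (3 * N k - T k : ℝ)
  isLittleO : (fun k ↦ (3 * N k - T k : ℝ)) =o[atTop] fun k ↦ (N k : ℝ)

variable {N T : ℕ → ℕ}

lemma IsCutoff.tendsto_mul_inv_sqrt_sq (hT : IsCutoff N T) :
    Tendsto (fun k ↦ T k * (√(N k))⁻¹ ^ 2) atTop (𝓝 3) := by
  have hlim := hT.isLittleO.tendsto_div_nhds_zero.const_sub 3
  rw [sub_zero] at hlim
  refine hlim.congr' ?_
  filter_upwards [hT.tendsto_atTop.eventually_gt_atTop 0] with k hk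
  have : (N k : ℝ) ≠ 0 := by positivity
  rw [inv_pow, Real.sq_sqrt (by positivity)]
  field_simp
  ring

lemma IsCutoff.tendsto_inv_sqrt (hT : IsCutoff N T) :
    Tendsto (fun k ↦ (√(N k))⁻¹) atTop (𝓝 0) :=
  tendsto_inv_atTop_zero.comp <| Real.tendsto_sqrt_atTop.comp <|
    tendsto_natCast_atTop_atTop.comp hT.tendsto_atTop

lemma IsCutoff.tendsto_sqrt_div_sqrt (hT : IsCutoff N T) :
    Tendsto (fun k ↦ √(3 * N k - T k) / √(N k)) atTop (𝓝 0) := by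
  have hlim := hT.isLittleO.tendsto_div_nhds_zero.sqrt
  rw [Real.sqrt_zero] at hlim
  exact hlim.congr fun k ↦ Real.sqrt_div' _ (by positivity)

lemma IsCutoff.comp_tendsto {φ : ℕ → ℕ} (hT : IsCutoff N T) (hφ : Tendsto φ atTop atTop) :
    IsCutoff (N ∘ φ) (T ∘ φ) where
  le k := hT.le (φ k)
  tendsto_atTop := hT.tendsto_atTop.comp hφ
  sqrt_isLittleO := hT.sqrt_isLittleO.comp_tendsto hφ
  isLittleO := hT.isLittleO.comp_tendsto hφ

lemma three_mul_sub_T0 (n : ℕ) : (3 * n - T0 n : ℝ) = 3 * ⌈(n : ℝ) ^ (2 / 3 : ℝ)⌉₊ := by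
  have hceil : ⌈(n : ℝ) ^ (2 / 3 : ℝ)⌉₊ ≤ n := by
    refine Nat.ceil_le.2 ?_
    rcases n.eq_zero_or_pos with rfl | hn
    · norm_num
    · exact Real.rpow_le_self_of_one_le (mod_cast hn) (by norm_num)
  rw [T0, Nat.cast_sub (by omega)]
  push_cast
  ring

lemma isLittleO_rpow_rpow_atTop {p q : ℝ} (hpq : p < q) :
    (fun x : ℝ ↦ x ^ p) =o[atTop] fun x ↦ x ^ q := by
  refine isLittleO_of_tendsto' ?_ ((tendsto_rpow_neg_atTop (sub_pos.2 hpq)).congr' ?_)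
  · filter_upwards [eventually_gt_atTop 0] with x hx h0
    exact absurd h0 (Real.rpow_pos_of_pos hx q).ne'
  · filter_upwards [eventually_gt_atTop 0] with x hx
    rw [neg_sub, Real.rpow_sub hx]

lemma isCutoff_T0 : IsCutoff (fun n ↦ n) T0 := by
  have hrpow {p q : ℝ} (hpq : p < q) :
      (fun n : ℕ ↦ (n : ℝ) ^ p) =o[atTop] fun n : ℕ ↦ (n : ℝ) ^ q :=
    (isLittleO_rpow_rpow_atTop hpq).comp_tendsto tendsto_natCast_atTop_atTop
  have hT : (fun n : ℕ ↦ (3 * n - T0 n : ℝ)) =Θ[atTop] fun n ↦ (n : ℝ) ^ (2 / 3 : ℝ) := by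
    simp only [three_mul_sub_T0]
    have hlim : Tendsto (fun n : ℕ ↦ (n : ℝ) ^ (2 / 3 : ℝ)) atTop atTop :=
      (tendsto_rpow_atTop (by norm_num)).comp tendsto_natCast_atTop_atTop
    exact (isEquivalent_nat_ceil.comp_tendsto hlim).isTheta.const_mul_left three_ne_zero
  refine ⟨fun n ↦ Nat.sub_le _ _, tendsto_id, ?_, ?_⟩
  · simp only [Real.sqrt_eq_rpow]
    exact (hrpow (by norm_num)).trans_isTheta hT.symm
  · simpa only [Real.rpow_one] using hT.trans_isLittleO (hrpow (show (2 / 3 : ℝ) < 1 by norm_num))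

end Cutoff

section Limits

variable {Ω : ℕ → Type*} [∀ k, MeasurableSpace (Ω k)] {μ : ∀ k, Measure (Ω k)}
  {N T : ℕ → ℕ} {r m : ∀ k, ℕ → Ω k → Fin 3}

lemma tendsto_measureReal_not_allOpen
    (H : ∀ k, IsGreedyVsNonStupid (N k) (μ k) (r k) (m k)) (hT : IsCutoff N T) :
    Tendsto (fun k ↦ (μ k).real {ω | ¬ AllOpen (N k) (T k) (history (r k) (m k) ω)}) atTop
      (𝓝 0) := by
  have hlim := (hT.sqrt_isLittleO.tendsto_div_nhds_zero.pow 2).const_mul 36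
  norm_num only at hlim
  refine squeeze_zero' (Eventually.of_forall fun k ↦ measureReal_nonneg) ?_ hlim
  filter_upwards [hT.sqrt_isLittleO.def one_pos, hT.tendsto_atTop.eventually_gt_atTop 0]
    with k hsqrt hN
  have hpos : (3 * N k - T k : ℝ) ≠ 0 := by
    intro h0
    rw [h0, norm_zero, mul_zero, norm_le_zero_iff, Real.sqrt_eq_zero (by positivity)] at hsqrt
    exact hN.ne' (mod_cast hsqrt)
  have hle : (T k : ℝ) ≤ 3 * N k := mod_cast hT.le k
  rw [div_pow, Real.sq_sqrt (by positivity), ← mul_div_assoc, le_div_iff₀ (by positivity), mul_comm]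
  linarith [sq_mul_real_not_allOpen_le (H k) (hT.le k)]

lemma IsCutoff.tendsto_uniformCharFun_inv_sqrt_pow (hT : IsCutoff N T) {v : Fin 3 → ℝ}
    (hv : ∑ j, v j = 0) (x : ℝ) :
    Tendsto (fun k ↦ uniformCharFun v ((√(N k))⁻¹ * x) ^ T k) atTop
      (𝓝 (Complex.exp (-((∑ j, v j ^ 2) * x ^ 2 / 2 : ℝ)))) := by
  have ha : Tendsto (fun k ↦ (√(N k))⁻¹ * x) atTop (𝓝 0) := by
    simpa using hT.tendsto_inv_sqrt.mul_const x
  have hvar : Tendsto (fun k ↦ T k * ((√(N k))⁻¹ * x) ^ 2) atTop (𝓝 (3 * x ^ 2)) :=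
    (hT.tendsto_mul_inv_sqrt_sq.mul_const (x ^ 2)).congr fun k ↦ by ring
  convert tendsto_uniformCharFun_pow hv ha hvar using 5
  ring

lemma tendsto_integral_prod_exp {f : Fin 3 → Fin 3 → ℝ} {v : Fin 3 → ℝ}
    (H : ∀ k, IsGreedyVsNonStupid (N k) (μ k) (r k) (m k)) (hT : IsCutoff N T)
    (hf : ∀ b, ∃ e : Equiv.Perm (Fin 3), ∀ a, f a b = v (e a)) (hv : ∑ j, v j = 0) (x : ℝ) :
    Tendsto (fun k ↦ ∫ ω, ∏ u ∈ Finset.range (T k),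
        Complex.exp ((f (r k u ω) (m k u ω) * ((√(N k))⁻¹ * x) : ℝ) * Complex.I) ∂μ k) atTop
      (𝓝 (Complex.exp (-((∑ j, v j ^ 2) * x ^ 2 / 2 : ℝ)))) := by
  have hmean (k : ℕ) (b : Fin 3) :
      ∑ a, Complex.exp ((f a b * ((√(N k))⁻¹ * x) : ℝ) * Complex.I) =
        3 * uniformCharFun v ((√(N k))⁻¹ * x) := by
    obtain ⟨e, he⟩ := hf b
    simp only [he]
    rw [Equiv.sum_comp e fun j ↦ Complex.exp ((v j * ((√(N k))⁻¹ * x) : ℝ) * Complex.I),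
      uniformCharFun, mul_div_cancel₀ _ three_ne_zero]
  have hbad := (tendsto_measureReal_not_allOpen H hT).const_mul 2
  rw [mul_zero] at hbad
  refine tendsto_of_tendsto_of_dist (hT.tendsto_uniformCharFun_inv_sqrt_pow hv x)
    (squeeze_zero (fun _ ↦ dist_nonneg) (fun k ↦ ?_) hbad)
  rw [dist_comm, dist_eq_norm]
  exact norm_integral_prod_sub_pow_le (H k)
    (ψ := fun a b ↦ Complex.exp ((f a b * ((√(N k))⁻¹ * x) : ℝ) * Complex.I))
    (fun a b ↦ (Complex.norm_exp_ofReal_mul_I _).le) (hmean k) (hT.le k)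

variable [∀ k, IsProbabilityMeasure (μ k)] {Ω' : Type*} [MeasurableSpace Ω'] {P : Measure Ω'}
  [IsProbabilityMeasure P]

theorem tendstoInDistribution_sum_div_sqrt {f : Fin 3 → Fin 3 → ℝ} {v : Fin 3 → ℝ} {Z : Ω' → ℝ}
    (H : ∀ k, IsGreedyVsNonStupid (N k) (μ k) (r k) (m k)) (hT : IsCutoff N T)
    (hf : ∀ b, ∃ e : Equiv.Perm (Fin 3), ∀ a, f a b = v (e a)) (hv : ∑ j, v j = 0)
    (hZ : HasLaw Z (gaussianReal 0 (∑ j, v j ^ 2).toNNReal) P) :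
    TendstoInDistribution
      (fun k ω ↦ (∑ u ∈ Finset.range (T k), f (r k u ω) (m k u ω)) / √(N k)) atTop Z μ P := by
  have hmeas (k : ℕ) := measurable_sum_moves (H k).2.1 (H k).2.2.1 f (Finset.range (T k))
  refine ⟨fun k ↦ ((hmeas k).div_const _).aemeasurable, hZ.aemeasurable,
    ProbabilityMeasure.tendsto_of_tendsto_charFun fun x ↦ ?_⟩
  have hlim := tendsto_integral_prod_exp H hT hf hv x
  have hvar : ((∑ j, v j ^ 2).toNNReal : ℝ) = ∑ j, v j ^ 2 :=
    Real.coe_toNNReal _ (Finset.sum_nonneg fun j _ ↦ sq_nonneg _)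
  convert hlim using 2 with k
  · rw [ProbabilityMeasure.coe_mk, charFun_apply_real,
      integral_map ((hmeas k).div_const _).aemeasurable (by fun_prop)]
    refine integral_congr_ae (ae_of_all _ fun ω ↦ ?_)
    simp only [← Complex.exp_sum, ← Finset.sum_mul, ← Complex.ofReal_sum]
    push_cast
    ring_nf
  · simp only [ProbabilityMeasure.coe_mk, hZ.map_eq]
    rw [charFun_gaussianReal, ← Complex.ofReal_ofNat, hvar]
    push_cast
    ring_nf

theorem tendstoInDistribution_score_div_sqrt {Z : Ω' → ℝ}
    (H : ∀ k, IsGreedyVsNonStupid (N k) (μ k) (r k) (m k)) (hT : IsCutoff N T)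
    (hZ : HasLaw Z (gaussianReal 0 2) P) :
    TendstoInDistribution (fun k ω ↦ (score (r k) (m k) (T k) ω : ℝ) / √(N k)) atTop Z μ P := by
  simp only [score_eq_sum]
  have hvar : ∑ j, (![0, 1, -1] : Fin 3 → ℝ) j ^ 2 = 2 := by
    simp [Fin.sum_univ_three, one_add_one_eq_two]
  refine tendstoInDistribution_sum_div_sqrt (v := ![0, 1, -1]) H hT (fun b ↦ ?_)
    (by simp [Fin.sum_univ_three]) (by rwa [hvar, Real.toNNReal_ofNat])
  refine ⟨Equiv.subLeft b, fun a ↦ ?_⟩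
  fin_cases a <;> fin_cases b <;> simp [payoff]

/-- The sum in `hZ` is the quadratic form at `θ` of the covariance matrix
`[[2, -1, -1], [-1, 2, -1], [-1, -1, 2]]`. -/
theorem tendstoInDistribution_lead_div_sqrt {Z : Ω' → EuclideanSpace ℝ (Fin 3)}
    (H : ∀ k, IsGreedyVsNonStupid (N k) (μ k) (r k) (m k)) (hT : IsCutoff N T)
    (hZ : ∀ θ : EuclideanSpace ℝ (Fin 3), HasLaw (fun ω ↦ inner ℝ θ (Z ω))
      (gaussianReal 0 (Real.toNNReal (∑ i, (θ (i + 1) - θ i) ^ 2))) P) :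
    TendstoInDistribution (fun k ω ↦ WithLp.toLp 2 fun i ↦
      lead (history (r k) (m k) ω) (T k) i / √(N k)) atTop Z μ P := by
  have hproj (θ : EuclideanSpace ℝ (Fin 3)) (k : ℕ) (ω : Ω k) :
      inner ℝ θ (WithLp.toLp 2 fun i ↦ lead (history (r k) (m k) ω) (T k) i / √(N k)) =
        (∑ u ∈ Finset.range (T k), ∑ i, θ i * leadIncrement i (r k u ω)) / √(N k) := by
    rw [Finset.sum_comm, Finset.sum_div, PiLp.inner_apply]
    refine Finset.sum_congr rfl fun i _ ↦ ?_
    simp [lead_eq_sum, history, ← Finset.mul_sum]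
    ring
  refine tendstoInDistribution_of_forall_inner fun θ ↦ ?_
  simp only [hproj]
  refine tendstoInDistribution_sum_div_sqrt (f := fun a _ ↦ ∑ i, θ i * leadIncrement i a)
    (v := fun j ↦ θ (j + 1) - θ j) H hT (fun _ ↦ ⟨Equiv.addRight 2, fun a ↦ ?_⟩) ?_ (hZ θ)
  · fin_cases a <;> simp [Fin.sum_univ_three, leadIncrement] <;> ring
  · simp [Fin.sum_univ_three]
    ring

theorem tendsto_measure_score_sub_score_sub_max3_lead
    (H : ∀ k, IsGreedyVsNonStupid (N k) (μ k) (r k) (m k)) (hT : IsCutoff N T) {ε : ℝ}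
    (hε : 0 < ε) :
    Tendsto (fun k ↦ μ k {ω | ε ≤ ‖((score (r k) (m k) (3 * N k) ω - score (r k) (m k) (T k) ω : ℤ)
      : ℝ) / √(N k) - max3 (lead (history (r k) (m k) ω) (T k)) / √(N k)‖}) atTop (𝓝 0) := by
  have hlim := (tendsto_measureReal_not_allOpen H hT).add
    (hT.tendsto_sqrt_div_sqrt.const_mul (16 / ε))
  rw [mul_zero, add_zero] at hlim
  rw [← ENNReal.tendsto_toReal_zero_iff fun k ↦ measure_ne_top _ _]
  refine squeeze_zero' (Eventually.of_forall fun k ↦ ENNReal.toReal_nonneg) ?_ hlim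
  filter_upwards [hT.tendsto_atTop.eventually_gt_atTop 0] with k hN
  have hsqrt : 0 < √(N k) := by positivity
  have hle := measureReal_le_abs_score_sub_score_sub_max3_lead_le (H k) (hT.le k)
    (mul_pos hε hsqrt)
  simp only [← sub_div, norm_div, Real.norm_eq_abs, abs_of_pos hsqrt, le_div_iff₀ hsqrt]
  rwa [mul_div_mul_comm] at hle

theorem tendstoInDistribution_score_sub_score_div_sqrt {Z : Ω' → EuclideanSpace ℝ (Fin 3)}
    (H : ∀ k, IsGreedyVsNonStupid (N k) (μ k) (r k) (m k)) (hT : IsCutoff N T)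
    (hZ : ∀ θ : EuclideanSpace ℝ (Fin 3), HasLaw (fun ω ↦ inner ℝ θ (Z ω))
      (gaussianReal 0 (Real.toNNReal (∑ i, (θ (i + 1) - θ i) ^ 2))) P) :
    TendstoInDistribution (fun k ω ↦ ((score (r k) (m k) (3 * N k) ω -
      score (r k) (m k) (T k) ω : ℤ) : ℝ) / √(N k)) atTop (fun ω ↦ max3 (Z ω)) μ P := by
  have hlead := (tendstoInDistribution_lead_div_sqrt H hT hZ).continuous_comp
    (continuous_max3.comp (by fun_prop : Continuous fun x : EuclideanSpace ℝ (Fin 3) ↦ ⇑x))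
  refine tendstoInDistribution_of_tendsto_measure_sub hlead (fun k ↦ ?_) fun ε hε ↦ ?_
  · simp only [score_sub_score_eq_sum _ _ (hT.le k)]
    exact ((measurable_sum_moves (H k).2.1 (H k).2.2.1 payoff _).div_const _).aemeasurable
  · simpa [Function.comp_def, max3_div] using tendsto_measure_score_sub_score_sub_max3_lead H hT hε

end Limits

/-- Theorem TN: if the restricted player plays greedily and the
unrestricted player uses, for each `n`, an arbitrary non-stupid strategy, then
`n^{-1/2}·S(T₀) ⇒ N(0,2)` and `n^{-1/2}·(S_n − S(T₀)) ⇒ max(Z₁,Z₂,Z₃)`, where `(Z₁,Z₂,Z₃)`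
is a centered Gaussian vector with covariance matrix `[[2,−1,−1],[−1,2,−1],[−1,−1,2]]`. -/
theorem greedy_vs_nonstupid_limits
    (Ω : ℕ → Type*) [∀ n, MeasurableSpace (Ω n)] (μ : ∀ n, Measure (Ω n))
    (r m : ∀ n, ℕ → Ω n → Fin 3)
    (hproc : ∀ n, 1 ≤ n → IsGreedyVsNonStupid n (μ n) (r n) (m n))
    {Ω' : Type*} [MeasurableSpace Ω'] (P : Measure Ω') [IsProbabilityMeasure P]
    (Z1 Z2 Z3 : Ω' → ℝ)
    (hZ1 : Measurable Z1) (hZ2 : Measurable Z2) (hZ3 : Measurable Z3)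
    (hZ : ∀ a b c : ℝ, P.map (fun ω => a * Z1 ω + b * Z2 ω + c * Z3 ω)
        = gaussianReal 0 (Real.toNNReal
            (2 * (a ^ 2 + b ^ 2 + c ^ 2) - 2 * (a * b + a * c + b * c)))) :
    (∀ g : BoundedContinuousFunction ℝ ℝ,
        Tendsto (fun n : ℕ =>
            ∫ ω, g ((score (r n) (m n) (T0 n) ω : ℝ) / Real.sqrt n) ∂(μ n))
          atTop (𝓝 (∫ x, g x ∂(gaussianReal 0 2)))) ∧
    (∀ g : BoundedContinuousFunction ℝ ℝ,
        Tendsto (fun n : ℕ =>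
            ∫ ω, g (((score (r n) (m n) (3 * n) ω
                - score (r n) (m n) (T0 n) ω : ℤ) : ℝ) / Real.sqrt n) ∂(μ n))
          atTop (𝓝 (∫ ω, g (max (Z1 ω) (max (Z2 ω) (Z3 ω))) ∂P))) := by
  have H (k : ℕ) := hproc (k + 1) k.succ_pos
  have hμ (k : ℕ) := (H k).1
  have hT := isCutoff_T0.comp_tendsto (tendsto_add_atTop_nat 1)
  refine ⟨fun g ↦ (tendsto_add_atTop_iff_nat 1).1 ?_, fun g ↦ (tendsto_add_atTop_iff_nat 1).1 ?_⟩
  · exact tendsto_integral_comp_of_tendstoInDistribution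
      (tendstoInDistribution_score_div_sqrt H hT HasLaw.id) g
  · refine tendsto_integral_comp_of_tendstoInDistribution
      (tendstoInDistribution_score_sub_score_div_sqrt
        (Z := fun ω ↦ !₂[Z1 ω, Z2 ω, Z3 ω]) H hT fun θ ↦ ⟨by fun_prop, ?_⟩) g
    convert hZ (θ 0) (θ 1) (θ 2) using 3
    · simp [PiLp.inner_apply, Fin.sum_univ_three]; ring
    · simp [Fin.sum_univ_three]; ring

end RPSStrategy
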